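/- Let m be a (local or global) minimum of G of type k and strength λ, and fix α with 1 − 1/(2(2k−1)) < α < 1. Suppose that for μ-almost every realization h the sequence of laws of (S_n − n m)/n^α + W/n^{α−1/2} under P_{n,β}^h ⊗ N(0, β^{−1}) satisfies a moderate deviations principle with speed n^{1−2k(1−α)} and rate function J(x) = λ x^{2k}/(2k)!. Then for μ-almost every realization h the sequence of laws of (S_n − n m)/n^α under P_{n,β}^h satisfies a moderate deviations principle with speed n^{1−2k(1−α)} and rate function I(x) = x²/(2σ²) with σ² = λ^{−1} − β^{−1} if k = 1, and I(x) = λ x^{2k}/(2k)! if k ≥ 2. -/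

import Mathlib

open MeasureTheory ProbabilityTheory Real Filter Topology
open scoped ENNReal NNReal

noncomputable section

/-- The value of a spin encoded as a Boolean. -/
def spin (b : Bool) : ℝ := if b then 1 else -1

/-- Total magnetization of a configuration. -/
def mag {n : ℕ} (σ : Fin n → Bool) : ℝ := ∑ i, spin (σ i)

/-- Gibbs weight of a configuration in the random field Curie-Weiss model. -/
def gibbsWeight (β : ℝ) (h : ℕ → ℝ) (n : ℕ) (σ : Fin n → Bool) : ℝ :=
  Real.exp (β / (2 * n) * (mag σ) ^ 2 + β * ∑ i : Fin n, h i * spin (σ i))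

/-- The random field Curie-Weiss Gibbs measure on configurations. -/
def gibbsMeasure (β : ℝ) (h : ℕ → ℝ) (n : ℕ) : Measure (Fin n → Bool) :=
  (ENNReal.ofReal (∑ σ : Fin n → Bool, gibbsWeight β h n σ))⁻¹ •
    ∑ σ : Fin n → Bool, ENNReal.ofReal (gibbsWeight β h n σ) • Measure.dirac σ

/-- `μ` is the infinite product of `ν` over `ℕ` (characterised by finite marginals). -/
def IsProductMeasure (ν : Measure ℝ) (μ : Measure (ℕ → ℝ)) : Prop :=
  ∀ n : ℕ, μ.map (fun h (i : Fin n) => h (i : ℕ)) = Measure.pi fun _ : Fin n => ν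

/-- extended logarithm, `elog 0 = ⊥`, `elog ⊤ = ⊤`. -/
def elog (x : ℝ≥0∞) : EReal :=
  if x = 0 then ⊥ else if x = ⊤ then ⊤ else ((Real.log x.toReal : ℝ) : EReal)

/-- A sequence of measures satisfies a large deviations principle with given speed and
rate function. -/
def HasLDP (P : ℕ → Measure ℝ) (speed : ℕ → ℝ) (I : ℝ → ℝ≥0∞) : Prop :=
  LowerSemicontinuous I ∧ (∀ c : ℝ, IsCompact {x : ℝ | I x ≤ ENNReal.ofReal c}) ∧
    ∀ C : Set ℝ, MeasurableSet C →
      -(⨅ x ∈ interior C, (I x : EReal)) ≤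
          liminf (fun n => ((((speed n)⁻¹ : ℝ) : EReal)) * elog (P n C)) atTop ∧
        limsup (fun n => ((((speed n)⁻¹ : ℝ) : EReal)) * elog (P n C)) atTop ≤
          -(⨅ x ∈ closure C, (I x : EReal))

/-- The function `G` of the random field Curie-Weiss model. -/
def G (β : ℝ) (ν : Measure ℝ) (x : ℝ) : ℝ :=
  β / 2 * x ^ 2 - ∫ h, Real.log (Real.cosh (β * (x + h))) ∂ν

/-- The finite-volume function `G_n^h`. -/
def Gn (β : ℝ) (h : ℕ → ℝ) (n : ℕ) (x : ℝ) : ℝ :=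
  β / 2 * x ^ 2 - (1 / n) * ∑ i : Fin n, Real.log (Real.cosh (β * (x + h i)))

/-- `m` is a (local or global) minimum of `G` of type `k` and strength `l`. -/
def IsMinOfType (β : ℝ) (ν : Measure ℝ) (m : ℝ) (k : ℕ) (l : ℝ) : Prop :=
  1 ≤ k ∧ 0 < l ∧ (∀ i : ℕ, 1 ≤ i → i ≤ 2 * k - 1 → iteratedDeriv i (G β ν) m = 0) ∧
    iteratedDeriv (2 * k) (G β ν) m = l

/-- The height of a minimum `m` of `G`. -/
def height (β : ℝ) (ν : Measure ℝ) (m : ℝ) : ℝ := G β ν m - ⨅ w, G β ν w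

/-- The broadness of a minimum `m` of `G`. -/
def broadness (β : ℝ) (ν : Measure ℝ) (m : ℝ) : ℝ :=
  sInf ((fun y => |y - m|) '' {y | G β ν y < G β ν m})

/-- The moderate deviations rate function. -/
def mdpRate (β l : ℝ) (k : ℕ) (x : ℝ) : ℝ≥0∞ :=
  if k = 1 then ENNReal.ofReal (x ^ 2 / (2 * (l⁻¹ - β⁻¹)))
  else ENNReal.ofReal (l * x ^ (2 * k) / (Nat.factorial (2 * k)))

/-- The polynomial `P_{2k}`. -/
def P2k (l : ℝ) (k : ℕ) (s : ℝ) : ℝ :=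
  l / (2 * (Nat.factorial (2 * k))) * s ^ (2 * k) - ∑ i ∈ Finset.Icc 1 (2 * k - 1), |s| ^ i

/-!
Write `q` for the exponential rate of the Gaussian noise and `J` for that of the smoothed law. If
`x` is the unique minimizer of `u ↦ I u + q (y - u)`, with minimal value `J y`, then near `y` the
smoothed law is governed by the magnetization near `x` and the noise near `y - x`, so dividing its
local bounds at `y` by those of the noise at `y - x` gives local bounds with rate `I x` at `x`.

For `k ≥ 2` the noise is superexponentially small and `y = x`. For `k = 1` completing the square
gives `y = β / (β - l) * x`, provided `l < β`. To see that `l < β`, compare the smoothed density,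
proportional to `exp (-n β x ^ 2 / 2) * ∏ i, cosh (β (x + h i))`, at `m` and at `m ± n ^ (α - 1)`.
Log-convexity of `cosh` gives `l ≤ β`, and the inequality is strict since, by the law of large
numbers, a positive fraction of the fields stays in a bounded set, where log-convexity is uniform.
-/

/-! ### Exponential rates of decay -/

/-- `u` is eventually at most `exp (-s c)` for some `c > a`: a bound for the upper exponential rate
of `u` along the speed `s` that stays in the real numbers, so that no logarithm of `0` occurs. -/
def DecaysFaster (s : ℕ → ℝ) (a : ℝ) (u : ℕ → ℝ) : Prop :=
  ∃ c > a, ∀ᶠ n in atTop, u n ≤ exp (-(s n * c))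

/-- `u` is eventually at least `exp (-s c)` for some `c < a`, the lower counterpart of
`DecaysFaster`. -/
def DecaysSlower (s : ℕ → ℝ) (a : ℝ) (u : ℕ → ℝ) : Prop :=
  ∃ c < a, ∀ᶠ n in atTop, exp (-(s n * c)) ≤ u n

section DecayRates

variable {s u v w : ℕ → ℝ} {a b c : ℝ}

theorem eventually_mul_exp_neg_le (hs : Tendsto s atTop atTop) (N : ℝ) (hbc : b < c) :
    ∀ᶠ n in atTop, N * exp (-(s n * c)) ≤ exp (-(s n * b)) := by
  have hexp : Tendsto (fun n => exp (s n * (c - b))) atTop atTop :=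
    tendsto_exp_atTop.comp (hs.atTop_mul_const (sub_pos.2 hbc))
  filter_upwards [hexp.eventually_ge_atTop N] with n hn
  calc N * exp (-(s n * c)) ≤ exp (s n * (c - b)) * exp (-(s n * c)) := by gcongr
    _ = exp (-(s n * b)) := by rw [← exp_add]; ring_nf

theorem DecaysFaster.mono (hu : DecaysFaster s a u) (hba : b ≤ a) (hvu : ∀ n, v n ≤ u n) :
    DecaysFaster s b v := by
  obtain ⟨c, hc, h⟩ := hu
  exact ⟨c, hba.trans_lt hc, h.mono fun n hn => (hvu n).trans hn⟩

theorem DecaysSlower.mono (hu : DecaysSlower s a u) (hab : a ≤ b) (huv : ∀ n, u n ≤ v n) :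
    DecaysSlower s b v := by
  obtain ⟨c, hc, h⟩ := hu
  exact ⟨c, hc.trans_le hab, h.mono fun n hn => hn.trans (huv n)⟩

theorem DecaysFaster.exists_gt (hu : DecaysFaster s a u) : ∃ b > a, DecaysFaster s b u := by
  obtain ⟨c, hc, h⟩ := hu
  obtain ⟨b, hab, hbc⟩ := exists_between hc
  exact ⟨b, hab, c, hbc, h⟩

theorem DecaysFaster.add (hs : Tendsto s atTop atTop) (hu : DecaysFaster s a u)
    (hv : DecaysFaster s a v) : DecaysFaster s a (fun n => u n + v n) := by
  obtain ⟨c, hc, hu⟩ := hu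
  obtain ⟨d, hd, hv⟩ := hv
  obtain ⟨b, hab, hb⟩ := exists_between (lt_min hc hd)
  refine ⟨b, hab, ?_⟩
  filter_upwards [hu, hv, eventually_mul_exp_neg_le hs 2 (hb.trans_le (min_le_left c d)),
    eventually_mul_exp_neg_le hs 2 (hb.trans_le (min_le_right c d))] with n h₁ h₂ h₃ h₄
  linarith

theorem DecaysSlower.not_decaysFaster (hs : Tendsto s atTop atTop) (hu : DecaysSlower s a u) :
    ¬ DecaysFaster s a u := by
  obtain ⟨c, hc, hu⟩ := hu
  rintro ⟨d, hd, hu'⟩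
  obtain ⟨n, h₁, h₂, h₃⟩ :=
    (hu.and (hu'.and (eventually_mul_exp_neg_le hs 2 (hc.trans hd)))).exists
  linarith [exp_pos (-(s n * d))]

theorem DecaysSlower.of_le_add (hs : Tendsto s atTop atTop) (hw : DecaysSlower s a w)
    (hv : DecaysFaster s a v) (hwuv : ∀ n, w n ≤ u n + v n) : DecaysSlower s a u := by
  obtain ⟨c, hc, hw⟩ := hw
  obtain ⟨d, hd, hv⟩ := hv
  obtain ⟨b, hcb, hba⟩ := exists_between hc
  refine ⟨b, hba, ?_⟩
  filter_upwards [hw, hv, eventually_mul_exp_neg_le hs 2 hcb,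
    eventually_mul_exp_neg_le hs 2 (hba.trans hd)] with n h₁ h₂ h₃ h₄
  linarith [hwuv n, exp_pos (-(s n * b))]

theorem DecaysFaster.of_mul_le (hw : DecaysFaster s (a + b) w) (hv : DecaysSlower s b v)
    (hu : ∀ n, 0 ≤ u n) (huvw : ∀ n, u n * v n ≤ w n) : DecaysFaster s a u := by
  obtain ⟨c, hc, hw⟩ := hw
  obtain ⟨d, hd, hv⟩ := hv
  refine ⟨c - d, by linarith, ?_⟩
  filter_upwards [hw, hv] with n h₁ h₂
  refine le_of_mul_le_mul_right ?_ (exp_pos (-(s n * d)))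
  calc u n * exp (-(s n * d)) ≤ u n * v n := by gcongr; exact hu n
    _ ≤ exp (-(s n * c)) := (huvw n).trans h₁
    _ = exp (-(s n * (c - d))) * exp (-(s n * d)) := by rw [← exp_add]; ring_nf

theorem DecaysFaster.mul (hu : DecaysFaster s a u) (hv : DecaysFaster s b v)
    (hv₀ : ∀ n, 0 ≤ v n) : DecaysFaster s (a + b) fun n => u n * v n := by
  obtain ⟨c, hc, hu⟩ := hu
  obtain ⟨d, hd, hv⟩ := hv
  refine ⟨c + d, by linarith, ?_⟩
  filter_upwards [hu, hv] with n h₁ h₂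
  calc u n * v n ≤ exp (-(s n * c)) * exp (-(s n * d)) := by gcongr; exact hv₀ n
    _ = exp (-(s n * (c + d))) := by rw [← exp_add]; ring_nf

theorem DecaysSlower.mul (hu : DecaysSlower s a u) (hv : DecaysSlower s b v) :
    DecaysSlower s (a + b) fun n => u n * v n := by
  obtain ⟨c, hc, hu⟩ := hu
  obtain ⟨d, hd, hv⟩ := hv
  refine ⟨c + d, by linarith, ?_⟩
  filter_upwards [hu, hv] with n h₁ h₂
  calc exp (-(s n * (c + d))) = exp (-(s n * c)) * exp (-(s n * d)) := by
        rw [← exp_add]; ring_nf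
    _ ≤ u n * v n := mul_le_mul h₁ h₂ (exp_pos _).le ((exp_pos _).le.trans h₁)

theorem DecaysSlower.of_le_mul (hw : DecaysSlower s (a + b) w) (hv : DecaysFaster s b v)
    (hu : ∀ n, 0 ≤ u n) (hwuv : ∀ n, w n ≤ u n * v n) : DecaysSlower s a u := by
  obtain ⟨c, hc, hw⟩ := hw
  obtain ⟨d, hd, hv⟩ := hv
  refine ⟨c - d, by linarith, ?_⟩
  filter_upwards [hw, hv] with n h₁ h₂
  refine le_of_mul_le_mul_right ?_ (exp_pos (-(s n * d)))
  calc exp (-(s n * (c - d))) * exp (-(s n * d)) = exp (-(s n * c)) := by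
        rw [← exp_add]; ring_nf
    _ ≤ u n * v n := h₁.trans (hwuv n)
    _ ≤ u n * exp (-(s n * d)) := by gcongr; exact hu n

theorem DecaysFaster.of_tendsto {r : ℕ → ℝ} (hr : Tendsto r atTop (𝓝 c)) (hac : a < c)
    (hs : Tendsto s atTop atTop) (hu : ∀ᶠ n in atTop, u n ≤ exp (-(s n * r n))) :
    DecaysFaster s a u := by
  obtain ⟨b, hab, hbc⟩ := exists_between hac
  refine ⟨b, hab, ?_⟩
  filter_upwards [hu, hr.eventually_const_lt hbc, hs.eventually_ge_atTop 0] with n h₁ h₂ h₃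
  exact h₁.trans (exp_le_exp.2 (neg_le_neg (by gcongr)))

theorem DecaysSlower.of_tendsto {r : ℕ → ℝ} (hr : Tendsto r atTop (𝓝 c)) (hca : c < a)
    (hs : Tendsto s atTop atTop) (hu : ∀ᶠ n in atTop, exp (-(s n * r n)) ≤ u n) :
    DecaysSlower s a u := by
  obtain ⟨b, hcb, hba⟩ := exists_between hca
  refine ⟨b, hba, ?_⟩
  filter_upwards [hu, hr.eventually_lt_const hcb, hs.eventually_ge_atTop 0] with n h₁ h₂ h₃
  exact (exp_le_exp.2 (neg_le_neg (by gcongr))).trans h₁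

end DecayRates

/-! ### Local large deviations bounds -/

/-- The local upper bound of a large deviations principle together with exponential tightness. The
levels `c` range over the reals, and `c < I x` is read in `EReal`. -/
structure HasLocalUpperBound {E : Type*} [TopologicalSpace E] [MeasurableSpace E]
    (P : ℕ → Measure E) (s : ℕ → ℝ) (I : E → ℝ≥0∞) : Prop where
  exists_nhds : ∀ (x : E) (c : ℝ), (c : EReal) < I x →
    ∃ U ∈ 𝓝 x, DecaysFaster s c fun n => (P n).real U
  exists_isCompact : ∀ c : ℝ, ∃ K : Set E, IsCompact K ∧ DecaysFaster s c fun n => (P n).real Kᶜ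

/-- The local lower bound of a large deviations principle. -/
def HasLocalLowerBound {E : Type*} [TopologicalSpace E] [MeasurableSpace E]
    (P : ℕ → Measure E) (s : ℕ → ℝ) (I : E → ℝ≥0∞) : Prop :=
  ∀ (x : E) (c : ℝ), (I x : EReal) < c → ∀ U ∈ 𝓝 x, DecaysSlower s c fun n => (P n).real U

section LocalBounds

variable {E X : Type*} [TopologicalSpace E] [MeasurableSpace E] [TopologicalSpace X] [T2Space X]
  {P : ℕ → Measure E} {s : ℕ → ℝ} {I : E → ℝ≥0∞} {c : ℝ}

/-- Uniformity in `y` comes from compactness: away from the fibre over `y` a point has a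
neighbourhood whose image avoids some neighbourhood of `y`. -/
theorem HasLocalUpperBound.exists_nhds_decaysFaster [∀ n, IsFiniteMeasure (P n)]
    (hP : HasLocalUpperBound P s I)
    (hs : Tendsto s atTop atTop) {f : E → X} (hf : Continuous f) {F : Set E} (hF : IsClosed F)
    {y : X} (hc : ∀ x ∈ F, f x = y → (c : EReal) < I x) :
    ∃ V ∈ 𝓝 y, DecaysFaster s c fun n => (P n).real (F ∩ f ⁻¹' V) := by
  obtain ⟨K, hK, hKc⟩ := hP.exists_isCompact c
  have hcompact : ∃ V ∈ 𝓝 y, DecaysFaster s c fun n => (P n).real (K ∩ (F ∩ f ⁻¹' V)) := by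
    refine hK.induction_on (p := fun A => ∃ V ∈ 𝓝 y,
      DecaysFaster s c fun n => (P n).real (A ∩ (F ∩ f ⁻¹' V))) ?_ ?_ ?_ ?_
    · refine ⟨Set.univ, univ_mem, c + 1, lt_add_one c, Eventually.of_forall fun n => ?_⟩
      simpa only [Set.empty_inter, measureReal_empty] using (exp_pos _).le
    · rintro A B hAB ⟨V, hV, hBV⟩
      exact ⟨V, hV, hBV.mono le_rfl fun n => measureReal_mono (by gcongr)⟩
    · rintro A B ⟨V, hV, hAV⟩ ⟨W, hW, hBW⟩
      refine ⟨V ∩ W, inter_mem hV hW, (hAV.add hs hBW).mono le_rfl fun n => ?_⟩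
      refine (measureReal_mono ?_).trans (measureReal_union_le _ _)
      rintro x ⟨hx | hx, hxF, hxV, hxW⟩
      exacts [Or.inl ⟨hx, hxF, hxV⟩, Or.inr ⟨hx, hxF, hxW⟩]
    · intro x _
      by_cases hx : x ∈ F ∧ f x = y
      · obtain ⟨U, hU, hUc⟩ := hP.exists_nhds x c (hc x hx.1 hx.2)
        exact ⟨U, mem_nhdsWithin_of_mem_nhds hU, Set.univ, univ_mem,
          hUc.mono le_rfl fun n => measureReal_mono Set.inter_subset_left⟩
      · obtain ⟨U, hU, V, hV, hUV⟩ : ∃ U ∈ 𝓝 x, ∃ V ∈ 𝓝 y, U ∩ (F ∩ f ⁻¹' V) = ∅ := by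
          rcases not_and_or.1 hx with hxF | hxy
          · exact ⟨Fᶜ, hF.isOpen_compl.mem_nhds hxF, Set.univ, univ_mem, by grind⟩
          · obtain ⟨U, hU, V, hV, hUV⟩ := Filter.disjoint_iff.1 (disjoint_nhds_nhds.2 hxy)
            refine ⟨f ⁻¹' U, hf.continuousAt hU, V, hV, Set.eq_empty_of_forall_notMem ?_⟩
            rintro z ⟨hzU, -, hzV⟩
            exact hUV.notMem_of_mem_left hzU hzV
        refine ⟨U, mem_nhdsWithin_of_mem_nhds hU, V, hV, c + 1, lt_add_one c,
          Eventually.of_forall fun n => ?_⟩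
        simpa only [hUV, measureReal_empty] using (exp_pos _).le
  obtain ⟨V, hV, hKV⟩ := hcompact
  refine ⟨V, hV, (hKV.add hs hKc).mono le_rfl fun n =>
    (measureReal_mono ?_).trans (measureReal_union_le _ _)⟩
  intro x hx
  by_cases hxK : x ∈ K
  exacts [Or.inl ⟨hxK, hx⟩, Or.inr hxK]

theorem HasLocalUpperBound.decaysFaster [∀ n, IsFiniteMeasure (P n)] (hP : HasLocalUpperBound P s I)
    (hs : Tendsto s atTop atTop) {C : Set E} (hc : ∀ x ∈ closure C, (c : EReal) < I x) :
    DecaysFaster s c fun n => (P n).real C := by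
  obtain ⟨V, hV, hCV⟩ := hP.exists_nhds_decaysFaster hs (f := fun _ => ()) continuous_const
    isClosed_closure (y := ()) fun x hx _ => hc x hx
  refine hCV.mono le_rfl fun n => measureReal_mono fun x hx => ⟨subset_closure hx, ?_⟩
  exact (mem_of_mem_nhds hV :)

theorem HasLocalLowerBound.lt_of_decaysFaster (hP : HasLocalLowerBound P s I)
    (hs : Tendsto s atTop atTop) {x : E} {U : Set E} (hU : U ∈ 𝓝 x)
    (hc : DecaysFaster s c fun n => (P n).real U) : (c : EReal) < I x := by
  obtain ⟨b, hcb, hb⟩ := hc.exists_gt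
  refine (EReal.coe_lt_coe_iff.2 hcb).trans_le (not_lt.1 fun hIb => ?_)
  exact (hP x b hIb U hU).not_decaysFaster hs hb

theorem HasLocalUpperBound.lowerSemicontinuous (hP : HasLocalUpperBound P s I)
    (hP' : HasLocalLowerBound P s I) (hs : Tendsto s atTop atTop) : LowerSemicontinuous I := by
  intro x a hax
  obtain ⟨c, hac, hcI⟩ :=
    EReal.lt_iff_exists_real_btwn.1 (EReal.coe_ennreal_lt_coe_ennreal_iff.2 hax)
  obtain ⟨U, hU, hUc⟩ := hP.exists_nhds x c hcI
  filter_upwards [eventually_mem_nhds_iff.2 hU] with z hz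
  exact EReal.coe_ennreal_lt_coe_ennreal_iff.1 (hac.trans (hP'.lt_of_decaysFaster hs hz hUc))

theorem HasLocalUpperBound.isCompact_sublevel [T2Space E] (hP : HasLocalUpperBound P s I)
    (hP' : HasLocalLowerBound P s I) (hs : Tendsto s atTop atTop) (c : ℝ) :
    IsCompact {x | I x ≤ ENNReal.ofReal c} := by
  obtain ⟨K, hK, hKc⟩ := hP.exists_isCompact (max c 0)
  refine hK.of_isClosed_subset
    ((hP.lowerSemicontinuous hP' hs).isClosed_preimage _) fun x hx => ?_
  by_contra hxK
  have hlt := hP'.lt_of_decaysFaster hs (hK.isClosed.isOpen_compl.mem_nhds hxK) hKc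
  rw [← EReal.coe_ennreal_ofReal] at hlt
  exact (EReal.coe_ennreal_lt_coe_ennreal_iff.1 hlt).not_ge hx

end LocalBounds

section LargeDeviations

variable {P : ℕ → Measure ℝ} [∀ n, IsProbabilityMeasure (P n)] {s : ℕ → ℝ} {I : ℝ → ℝ≥0∞}

theorem strictMono_inv_mul_elog {t : ℝ} (ht : 0 < t) :
    StrictMono fun p => ((t⁻¹ : ℝ) : EReal) * elog p := by
  have hlog : (fun p => ((t⁻¹ : ℝ) : EReal) * elog p) = fun p => ENNReal.log (p ^ t⁻¹) :=
    funext fun p => ENNReal.log_rpow.symm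
  rw [hlog]
  exact ENNReal.log_strictMono.comp (ENNReal.strictMono_rpow_of_pos (inv_pos.2 ht))

theorem inv_mul_elog_exp {t : ℝ} (ht : 0 < t) (r : ℝ) :
    ((t⁻¹ : ℝ) : EReal) * elog (ENNReal.ofReal (exp (t * r))) = r := by
  have hlog : elog (ENNReal.ofReal (exp (t * r))) = ((t * r : ℝ) : EReal) := by
    rw [← Real.log_exp (t * r), ← ENNReal.log_ofReal_of_pos (exp_pos _), Real.log_exp]
    rfl
  rw [hlog, ← EReal.coe_mul, inv_mul_cancel_left₀ ht.ne']

theorem inv_mul_elog_lt_iff {t r : ℝ} {p : ℝ≥0∞} (ht : 0 < t) (hp : p ≠ ⊤) :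
    ((t⁻¹ : ℝ) : EReal) * elog p < r ↔ p.toReal < exp (t * r) := by
  rw [← inv_mul_elog_exp ht r, (strictMono_inv_mul_elog ht).lt_iff_lt,
    ENNReal.lt_ofReal_iff_toReal_lt hp]

theorem lt_inv_mul_elog_iff {t r : ℝ} {p : ℝ≥0∞} (ht : 0 < t) (hp : p ≠ ⊤) :
    (r : EReal) < ((t⁻¹ : ℝ) : EReal) * elog p ↔ exp (t * r) < p.toReal := by
  rw [← inv_mul_elog_exp ht r, (strictMono_inv_mul_elog ht).lt_iff_lt,
    ENNReal.ofReal_lt_iff_lt_toReal (exp_pos _).le hp]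

theorem HasLDP.hasLocalUpperBound (h : HasLDP P s I) (hs : Tendsto s atTop atTop) :
    HasLocalUpperBound P s I := by
  obtain ⟨hlsc, hcompact, hC⟩ := h
  have hupper : ∀ (c : ℝ) {C : Set ℝ}, MeasurableSet C → (∀ x ∈ closure C, (c : EReal) ≤ I x) →
      ∀ b < c, DecaysFaster s b fun n => (P n).real C := by
    intro c C hCm hc b hbc
    obtain ⟨d, hbd, hdc⟩ := exists_between hbc
    have hlim : limsup (fun n => (((s n)⁻¹ : ℝ) : EReal) * elog (P n C)) atTop <
        ((-d : ℝ) : EReal) :=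
      ((hC C hCm).2.trans (EReal.neg_le_neg_iff.2 (le_iInf₂ hc))).trans_lt
        (EReal.coe_lt_coe_iff.2 (neg_lt_neg hdc))
    refine ⟨d, hbd, ?_⟩
    filter_upwards [eventually_lt_of_limsup_lt hlim, hs.eventually_gt_atTop 0] with n hn hsn
    rw [← mul_neg]
    exact ((inv_mul_elog_lt_iff hsn (measure_ne_top _ _)).1 hn).le
  refine ⟨fun x c hcx => ?_, fun c => ?_⟩
  · obtain ⟨d, hcd, hdx⟩ := EReal.lt_iff_exists_real_btwn.1 hcx
    have hnhds : ∀ᶠ z in 𝓝 x, (d : EReal) < I z :=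
      continuous_coe_ennreal_ereal.comp_lowerSemicontinuous hlsc
        (fun _ _ hle => EReal.coe_ennreal_le_coe_ennreal_iff.2 hle) x d hdx
    obtain ⟨U, hU, hUclosed, hUd⟩ := exists_mem_nhds_isClosed_subset hnhds
    exact ⟨U, hU, hupper d hUclosed.measurableSet
      (fun z hz => (hUd (hUclosed.closure_eq ▸ hz)).le) c (EReal.coe_lt_coe_iff.1 hcd)⟩
  · obtain ⟨K, hK, hsub⟩ := exists_compact_superset (hcompact (c + 1))
    refine ⟨K, hK, hupper (c + 1) hK.measurableSet.compl (fun z hz => ?_) c (lt_add_one c)⟩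
    rw [closure_compl] at hz
    have hIz : ENNReal.ofReal (c + 1) ≤ I z := (not_le.1 fun hle => hz (hsub hle)).le
    refine le_trans ?_ (EReal.coe_ennreal_le_coe_ennreal_iff.2 hIz)
    rw [EReal.coe_ennreal_ofReal]
    exact EReal.coe_le_coe_iff.2 (le_max_left _ _)

theorem HasLDP.hasLocalLowerBound (h : HasLDP P s I) (hs : Tendsto s atTop atTop) :
    HasLocalLowerBound P s I := by
  intro x c hxc U hU
  obtain ⟨d, hxd, hdc⟩ := EReal.lt_iff_exists_real_btwn.1 hxc
  have hlim : ((-d : ℝ) : EReal) <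
      liminf (fun n => (((s n)⁻¹ : ℝ) : EReal) * elog (P n (interior U))) atTop := by
    refine lt_of_lt_of_le ?_ (h.2.2 _ isOpen_interior.measurableSet).1
    rw [EReal.coe_neg, EReal.neg_lt_neg_iff, interior_interior]
    exact (iInf₂_le x (mem_interior_iff_mem_nhds.2 hU)).trans_lt hxd
  refine ⟨d, EReal.coe_lt_coe_iff.1 hdc, ?_⟩
  filter_upwards [eventually_lt_of_lt_liminf hlim, hs.eventually_gt_atTop 0] with n hn hsn
  rw [← mul_neg]
  exact ((lt_inv_mul_elog_iff hsn (measure_ne_top _ _)).1 hn).le.trans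
    (measureReal_mono interior_subset)

theorem HasLocalUpperBound.hasLDP (hP : HasLocalUpperBound P s I)
    (hP' : HasLocalLowerBound P s I) (hs : Tendsto s atTop atTop) : HasLDP P s I := by
  refine ⟨hP.lowerSemicontinuous hP' hs, hP.isCompact_sublevel hP' hs, fun C _ => ⟨?_, ?_⟩⟩
  · rw [EReal.neg_le]
    refine le_iInf₂ fun x hx => EReal.le_of_forall_lt_iff_le.1 fun c hc => ?_
    obtain ⟨d, hdc, hd⟩ := hP' x c hc C (mem_interior_iff_mem_nhds.1 hx)
    rw [EReal.neg_le]
    refine le_liminf_of_le (h := ?_)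
    filter_upwards [hd, hs.eventually_gt_atTop 0] with n hn hsn
    rw [← EReal.coe_neg, ← not_lt, inv_mul_elog_lt_iff hsn (measure_ne_top _ _), not_lt, mul_neg]
    exact (exp_le_exp.2 (neg_le_neg (by gcongr))).trans hn
  · rw [EReal.le_neg]
    refine EReal.ge_of_forall_gt_iff_ge.1 fun c hc => ?_
    obtain ⟨d, hcd, hd⟩ := hP.decaysFaster hs fun x hx => hc.trans_le (iInf₂_le x hx)
    rw [EReal.le_neg]
    refine limsup_le_of_le (h := ?_)
    filter_upwards [hd, hs.eventually_gt_atTop 0] with n hn hsn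
    rw [← EReal.coe_neg, ← not_lt, lt_inv_mul_elog_iff hsn (measure_ne_top _ _), not_lt, mul_neg]
    exact hn.trans (exp_le_exp.2 (neg_le_neg (by gcongr)))

end LargeDeviations

/-! ### Deconvolution -/

theorem exists_real_lt_add {a b : EReal} {c : ℝ} (h : (c : EReal) < a + b) :
    ∃ c₁ c₂ : ℝ, (c₁ : EReal) < a ∧ (c₂ : EReal) < b ∧ c₁ + c₂ = c := by
  obtain ⟨c₁, hc, hc₁⟩ := EReal.lt_iff_exists_real_btwn.1 (EReal.sub_lt_of_lt_add h)
  refine ⟨c₁, c - c₁, hc₁, ?_, add_sub_cancel c₁ c⟩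
  rw [EReal.sub_lt_iff (Or.inr (EReal.coe_ne_bot c)) (Or.inr (EReal.coe_ne_top c))] at hc
  exact EReal.sub_lt_of_lt_add' hc

theorem HasLocalUpperBound.prod {E F : Type*} [TopologicalSpace E] [MeasurableSpace E]
    [TopologicalSpace F] [MeasurableSpace F] {P : ℕ → Measure E} {Q : ℕ → Measure F}
    [∀ n, IsProbabilityMeasure (P n)] [∀ n, IsProbabilityMeasure (Q n)] {s : ℕ → ℝ}
    {I : E → ℝ≥0∞} {J : F → ℝ≥0∞} (hP : HasLocalUpperBound P s I) (hQ : HasLocalUpperBound Q s J)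
    (hs : Tendsto s atTop atTop) :
    HasLocalUpperBound (fun n => (P n).prod (Q n)) s fun p => I p.1 + J p.2 := by
  refine ⟨fun p c hc => ?_, fun c => ?_⟩
  · obtain ⟨c₁, c₂, hc₁, hc₂, rfl⟩ := exists_real_lt_add (EReal.coe_ennreal_add _ _ ▸ hc)
    obtain ⟨U, hU, hPU⟩ := hP.exists_nhds p.1 c₁ hc₁
    obtain ⟨V, hV, hQV⟩ := hQ.exists_nhds p.2 c₂ hc₂
    exact ⟨U ×ˢ V, prod_mem_nhds hU hV, (hPU.mul hQV fun n => measureReal_nonneg).mono le_rfl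
      fun n => (measureReal_prod_prod _ _).le⟩
  · obtain ⟨K, hK, hPK⟩ := hP.exists_isCompact c
    obtain ⟨L, hL, hQL⟩ := hQ.exists_isCompact c
    refine ⟨K ×ˢ L, hK.prod hL, (hPK.add hs hQL).mono le_rfl fun n => ?_⟩
    calc ((P n).prod (Q n)).real (K ×ˢ L)ᶜ
        ≤ ((P n).prod (Q n)).real (Kᶜ ×ˢ Set.univ ∪ Set.univ ×ˢ Lᶜ) :=
          measureReal_mono (Set.compl_prod_eq_union K L).subset
      _ ≤ (P n).real Kᶜ + (Q n).real Lᶜ := by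
          refine (measureReal_union_le _ _).trans_eq ?_
          simp only [measureReal_prod_prod, probReal_univ, mul_one, one_mul]

/-- The value at `y` of the infimal convolution of `I` and `q` is finite, equals `J y`, and is
attained at `x` only. Such a pair `(x, y)` lets the bounds for `J` at `y` be read as bounds for `I`
at `x`. -/
structure IsExposedBy {E : Type*} [AddCommGroup E] (I q J : E → ℝ≥0∞) (x y : E) : Prop where
  ne_top : J y ≠ ⊤
  eq_add : J y = I x + q (y - x)
  lt_add : ∀ u ≠ x, J y < I u + q (y - u)

theorem IsExposedBy.exists_real {E : Type*} [AddCommGroup E] {I q J : E → ℝ≥0∞} {x y : E}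
    (hxy : IsExposedBy I q J x y) : ∃ i r : ℝ, (I x : EReal) = i ∧ (q (y - x) : EReal) = r ∧
      (J y : EReal) = (i + r : ℝ) := by
  obtain ⟨hI, hq⟩ := ENNReal.add_ne_top.1 (hxy.eq_add ▸ hxy.ne_top)
  refine ⟨(I x).toReal, (q (y - x)).toReal, (EReal.coe_ennreal_toReal hI).symm,
    (EReal.coe_ennreal_toReal hq).symm, ?_⟩
  rw [← ENNReal.toReal_add hI hq, ← hxy.eq_add, EReal.coe_ennreal_toReal hxy.ne_top]

theorem decaysSlower_of_compl {E : Type*} [MeasurableSpace E] {Q : ℕ → Measure E}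
    [∀ n, IsProbabilityMeasure (Q n)] {s : ℕ → ℝ} (hs : Tendsto s atTop atTop) {a : ℝ}
    (ha : 0 < a) {A : Set E} (hA : DecaysFaster s a fun n => (Q n).real Aᶜ) :
    DecaysSlower s a fun n => (Q n).real A := by
  refine DecaysSlower.of_le_add hs (w := fun _ => 1) ⟨0, ha, ?_⟩ hA fun n => ?_
  · exact Eventually.of_forall fun n => by rw [mul_zero, neg_zero, exp_zero]
  · rw [← probReal_univ (μ := Q n), ← Set.union_compl_self A]
    exact measureReal_union_le _ _

theorem real_mul_real_le_conv {E : Type*} [AddCommGroup E] [MeasurableSpace E]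
    [MeasurableAdd₂ E] (P Q : Measure E) [IsFiniteMeasure P] [IsFiniteMeasure Q]
    {A B C : Set E} (h : ∀ a ∈ A, ∀ b ∈ B, a + b ∈ C) :
    P.real A * Q.real B ≤ (P ∗ Q).real C := by
  rw [← measureReal_prod_prod]
  refine ENNReal.toReal_mono (measure_ne_top _ _) ?_
  exact (measure_mono fun p hp => h p.1 hp.1 p.2 hp.2).trans
    (Measure.le_map_apply measurable_add.aemeasurable C)

section Deconvolution

variable {E : Type*} [AddCommGroup E] [TopologicalSpace E] [IsTopologicalAddGroup E]
  [MeasurableSpace E] {P Q : ℕ → Measure E}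
  [∀ n, IsProbabilityMeasure (P n)] [∀ n, IsProbabilityMeasure (Q n)]
  {s : ℕ → ℝ} {I q J : E → ℝ≥0∞}

theorem IsExposedBy.exists_nhds_decaysFaster [T2Space E] {x y : E} (hxy : IsExposedBy I q J x y)
    (hs : Tendsto s atTop atTop) (hP : HasLocalUpperBound P s I) (hQ : HasLocalUpperBound Q s q)
    {j : ℝ} (hj : (J y : EReal) = j) {U : Set E} (hU : U ∈ 𝓝 x) :
    ∃ V ∈ 𝓝 y, DecaysFaster s j
      fun n => ((P n).prod (Q n)).real {p | p.1 ∉ U ∧ p.1 + p.2 ∈ V} := by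
  have hF : IsClosed {p : E × E | p.1 ∉ interior U} :=
    isOpen_interior.isClosed_compl.preimage continuous_fst
  have hlt : ∀ p ∈ {p : E × E | p.1 ∉ interior U}, p.1 + p.2 = y →
      (j : EReal) < ((I p.1 + q p.2 : ℝ≥0∞) : EReal) := by
    rintro p hp rfl
    rw [← hj, EReal.coe_ennreal_lt_coe_ennreal_iff]
    have hpx : p.1 ≠ x := fun hpx => hp (hpx ▸ mem_interior_iff_mem_nhds.2 hU)
    simpa only [add_sub_cancel_left] using hxy.lt_add p.1 hpx
  obtain ⟨V, hV, hVj⟩ := (hP.prod hQ hs).exists_nhds_decaysFaster hs continuous_add hF hlt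
  exact ⟨V, hV, hVj.mono le_rfl fun n => measureReal_mono fun p hp =>
    ⟨fun hpU => hp.1 (interior_subset hpU), hp.2⟩⟩

variable [MeasurableAdd₂ E]

open scoped Pointwise in
theorem HasLocalUpperBound.of_conv (hs : Tendsto s atTop atTop)
    (hPQ : HasLocalUpperBound (fun n => P n ∗ Q n) s J) (hQ : HasLocalUpperBound Q s q)
    (hQ' : HasLocalLowerBound Q s q) (hJ : ∀ x, ∃ y, IsExposedBy I q J x y) :
    HasLocalUpperBound P s I := by
  refine ⟨fun x c hcx => ?_, fun c => ?_⟩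
  · obtain ⟨y, hxy⟩ := hJ x
    obtain ⟨i, r, hi, hr, hj⟩ := hxy.exists_real
    obtain ⟨d, hcd, hdi⟩ := exists_between (EReal.coe_lt_coe_iff.1 (hi ▸ hcx))
    obtain ⟨W, hW, hPQW⟩ := hPQ.exists_nhds y (d + r)
      (hj ▸ EReal.coe_lt_coe_iff.2 (add_lt_add_left hdi r))
    have hadd : Tendsto (fun p : E × E => p.1 + p.2) (𝓝 x ×ˢ 𝓝 (y - x)) (𝓝 y) := by
      simpa only [add_sub_cancel] using
        (tendsto_fst (f := 𝓝 x) (g := 𝓝 (y - x))).add tendsto_snd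
    obtain ⟨U, hU, V, hV, hUV⟩ := mem_prod_iff.1 (hadd hW)
    have hQV : DecaysSlower s (r + (d - c)) fun n => (Q n).real V :=
      hQ' _ _ (hr ▸ EReal.coe_lt_coe_iff.2 (by linarith)) V hV
    refine ⟨U, hU, (hPQW.mono (b := c + (r + (d - c))) (by linarith) fun n => le_rfl).of_mul_le hQV
      (fun n => measureReal_nonneg) fun n => real_mul_real_le_conv _ _ fun u hu v hv =>
        hUV (Set.mk_mem_prod hu hv)⟩
  · obtain ⟨L, hL, hQL⟩ := hQ.exists_isCompact 1
    replace hQL := decaysSlower_of_compl hs one_pos hQL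
    obtain ⟨K, hK, hPQK⟩ := hPQ.exists_isCompact (c + 1)
    refine ⟨K + -L, hK.add hL.neg, hPQK.of_mul_le hQL (fun n => measureReal_nonneg) fun n =>
      real_mul_real_le_conv _ _ fun a ha b hb hab => ha ?_⟩
    exact Set.mem_add.2 ⟨a + b, hab, -b, Set.neg_mem_neg.2 hb, add_neg_cancel_right a b⟩

theorem HasLocalLowerBound.of_conv [T2Space E] [OpensMeasurableSpace E]
    (hs : Tendsto s atTop atTop)
    (hPQ : HasLocalLowerBound (fun n => P n ∗ Q n) s J) (hP : HasLocalUpperBound P s I)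
    (hQ : HasLocalUpperBound Q s q) (hJ : ∀ x, ∃ y, IsExposedBy I q J x y) :
    HasLocalLowerBound P s I := by
  intro x c hxc U hU
  obtain ⟨y, hxy⟩ := hJ x
  obtain ⟨i, r, hi, hr, hj⟩ := hxy.exists_real
  have hic : i < c := EReal.coe_lt_coe_iff.1 (hi ▸ hxc)
  obtain ⟨V, hV, hQV⟩ := hQ.exists_nhds (y - x) (r - (c - i) / 2)
    (hr ▸ EReal.coe_lt_coe_iff.2 (by linarith))
  have hsub : Tendsto (fun p : E × E => p.1 - p.2) (𝓝 y ×ˢ 𝓝 x) (𝓝 (y - x)) :=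
    tendsto_fst.sub tendsto_snd
  obtain ⟨W, hW, U', hU', hWU'⟩ := mem_prod_iff.1 (hsub hV)
  obtain ⟨W', hW', hrest⟩ := hxy.exists_nhds_decaysFaster hs hP hQ hj (inter_mem hU hU')
  obtain ⟨b, hb, hrest⟩ := hrest.exists_gt
  obtain ⟨e, he, heb⟩ := exists_between (lt_min hb (show i + r < c + (r - (c - i) / 2) by linarith))
  obtain ⟨O, hO, hOopen, hyO⟩ := mem_nhds_iff.1 (inter_mem hW hW')
  have hsplit : ∀ n, (P n ∗ Q n).real O ≤ (P n).real U * (Q n).real V +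
      ((P n).prod (Q n)).real {p | p.1 ∉ U ∩ U' ∧ p.1 + p.2 ∈ W'} := by
    intro n
    rw [← measureReal_prod_prod, Measure.conv,
      map_measureReal_apply measurable_add hOopen.measurableSet]
    refine (measureReal_mono fun p hp => ?_).trans (measureReal_union_le _ _)
    by_cases hpU : p.1 ∈ U ∩ U'
    · refine Or.inl ⟨hpU.1, ?_⟩
      have hmem : p.1 + p.2 - p.1 ∈ V := hWU' (Set.mk_mem_prod (hO hp).1 hpU.2)
      rwa [add_sub_cancel_left] at hmem
    · exact Or.inr ⟨hpU, (hO hp).2⟩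
  have hPQO : DecaysSlower s e fun n => (P n ∗ Q n).real O :=
    hPQ y e (hj ▸ EReal.coe_lt_coe_iff.2 he) O (hOopen.mem_nhds hyO)
  have hPU := hPQO.of_le_add hs (hrest.mono (heb.le.trans (min_le_left _ _)) fun n => le_rfl) hsplit
  exact (hPU.mono (heb.le.trans (min_le_right _ _)) fun n => le_rfl).of_le_mul hQV
    (fun n => measureReal_nonneg) fun n => le_rfl

end Deconvolution

/-! ### Gaussian noise -/

section Gaussian

/-- The exponential rate function of centered Gaussians whose variances are asymptotically `τ`
divided by the speed. The conventions for division in `ℝ≥0∞` make `τ = 0` give the rate of the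
Dirac mass at `0`. -/
def gaussianRate (τ : ℝ≥0) (x : ℝ) : ℝ≥0∞ := ENNReal.ofReal (x ^ 2) / (2 * τ)

theorem gaussianRate_eq_ofReal {τ : ℝ≥0} (hτ : τ ≠ 0) (x : ℝ) :
    gaussianRate τ x = ENNReal.ofReal (x ^ 2 / (2 * τ)) := by
  have hτ' : (0 : ℝ) < 2 * τ := by positivity
  rw [gaussianRate, ENNReal.ofReal_div_of_pos hτ', ENNReal.ofReal_mul zero_le_two,
    ENNReal.ofReal_ofNat, ENNReal.ofReal_coe_nnreal]

theorem gaussianRate_zero_of_ne {x : ℝ} (hx : x ≠ 0) : gaussianRate 0 x = ⊤ := by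
  rw [gaussianRate, ENNReal.coe_zero, mul_zero, ENNReal.div_zero]
  exact (ENNReal.ofReal_pos.2 (by positivity)).ne'

theorem gaussianRate_apply_zero (τ : ℝ≥0) : gaussianRate τ 0 = 0 := by
  rw [gaussianRate, zero_pow two_ne_zero, ENNReal.ofReal_zero, ENNReal.zero_div]

theorem gaussianRate_pos (τ : ℝ≥0) {x : ℝ} (hx : x ≠ 0) : 0 < gaussianRate τ x :=
  ENNReal.div_pos (ENNReal.ofReal_pos.2 (by positivity)).ne' (by finiteness)

theorem exists_lt_legendre_of_lt_gaussianRate {τ : ℝ≥0} {x c : ℝ}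
    (hc : (c : EReal) < gaussianRate τ x) : ∃ t, c < t * x - τ * t ^ 2 / 2 := by
  rcases eq_or_ne τ 0 with rfl | hτ
  · rcases eq_or_ne x 0 with rfl | hx
    · rw [gaussianRate_apply_zero] at hc
      exact ⟨0, by simpa using hc⟩
    · exact ⟨(c + 1) / x, by simp [hx]⟩
  · rw [gaussianRate_eq_ofReal hτ, EReal.coe_ennreal_ofReal, max_eq_left (by positivity),
      EReal.coe_lt_coe_iff] at hc
    refine ⟨x / τ, hc.trans_eq ?_⟩
    field_simp
    ring

theorem gaussianReal_halfLine_le (v : ℝ≥0) {r : ℝ} (hr : 0 ≤ r) (t d : ℝ) :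
    (gaussianReal 0 v).real {x | d ≤ t * x} ≤ exp (-(r * (d - r * v * t ^ 2 / 2))) := by
  have hint : Integrable (fun x => exp (r * (t * x))) (gaussianReal 0 v) := by
    simpa only [mul_assoc] using integrable_exp_mul_gaussianReal (μ := 0) (v := v) (r * t)
  refine (measure_ge_le_exp_mul_mgf d hr hint).trans_eq ?_
  rw [mgf_const_mul, show mgf (fun x : ℝ => x) = mgf id from rfl, mgf_id_gaussianReal, ← exp_add]
  ring_nf

theorem gaussianReal_ball_shift_le {v : ℝ≥0} (hv : v ≠ 0) (z η : ℝ) :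
    exp (-((z ^ 2 / 2 + |z| * η) / v)) * (gaussianReal 0 v).real (Metric.ball 0 η) ≤
      (gaussianReal 0 v).real (Metric.ball z η) := by
  have hreal : ∀ μ : ℝ, (gaussianReal μ v).real (Metric.ball 0 η) =
      ∫ x in Metric.ball 0 η, gaussianPDFReal μ v x := fun μ => by
    rw [Measure.real, gaussianReal_apply_eq_integral μ hv, ENNReal.toReal_ofReal]
    exact integral_nonneg fun x => gaussianPDFReal_nonneg _ _ _
  have hshift : (gaussianReal 0 v).real (Metric.ball z η) =
      (gaussianReal (-z) v).real (Metric.ball 0 η) := by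
    rw [← zero_add (-z), ← gaussianReal_map_add_const,
      map_measureReal_apply (by fun_prop) Metric.isOpen_ball.measurableSet]
    congr 1
    ext x
    simp [Real.dist_eq, sub_eq_add_neg]
  rw [hshift, hreal, hreal, ← integral_const_mul]
  refine setIntegral_mono_on ((integrable_gaussianPDFReal _ _).integrableOn.const_mul _)
    (integrable_gaussianPDFReal _ _).integrableOn Metric.isOpen_ball.measurableSet fun x hx => ?_
  have hzx : z * x ≤ |z| * η := by
    refine (le_abs_self _).trans ?_
    rw [abs_mul]
    gcongr
    exact (mem_ball_zero_iff.1 hx).le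
  simp only [gaussianPDFReal]
  rw [mul_left_comm, ← exp_add]
  gcongr
  have hv' : (0 : ℝ) < v := by positivity
  rw [← sub_nonneg]
  have : -(x - -z) ^ 2 / (2 * v) - (-((z ^ 2 / 2 + |z| * η) / v) + -(x - 0) ^ 2 / (2 * v)) =
      (|z| * η - z * x) / v := by field_simp; ring
  rw [this]
  exact div_nonneg (sub_nonneg.2 hzx) hv'.le

variable {s : ℕ → ℝ} {v : ℕ → ℝ≥0} {τ : ℝ≥0}

theorem gaussianReal_halfLine_decaysFaster (hs : Tendsto s atTop atTop)
    (hv : Tendsto (fun n => s n * v n) atTop (𝓝 τ)) {t d c : ℝ} (hc : c < d - τ * t ^ 2 / 2) :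
    DecaysFaster s c fun n => (gaussianReal 0 (v n)).real {x | d ≤ t * x} := by
  refine DecaysFaster.of_tendsto (((hv.mul_const (t ^ 2)).div_const 2).const_sub d) hc hs ?_
  filter_upwards [hs.eventually_ge_atTop 0] with n hn
  exact gaussianReal_halfLine_le _ hn t d

theorem hasLocalUpperBound_gaussianReal (hs : Tendsto s atTop atTop)
    (hv : Tendsto (fun n => s n * v n) atTop (𝓝 τ)) :
    HasLocalUpperBound (fun n => gaussianReal 0 (v n)) s (gaussianRate τ) := by
  refine ⟨fun x c hc => ?_, fun c => ?_⟩
  · obtain ⟨t, ht⟩ := exists_lt_legendre_of_lt_gaussianRate hc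
    obtain ⟨d, hcd, hdx⟩ := exists_between (lt_sub_iff_add_lt.1 ht)
    have hnhds : ∀ᶠ u in 𝓝 x, d ≤ t * u :=
      ((continuous_const_mul t).tendsto x).eventually_const_le hdx
    exact ⟨_, hnhds, gaussianReal_halfLine_decaysFaster hs hv (lt_sub_iff_add_lt.2 hcd)⟩
  · obtain ⟨R, hR⟩ := exists_gt (c + τ / 2)
    refine ⟨Metric.closedBall 0 R, isCompact_closedBall 0 R, ?_⟩
    refine ((gaussianReal_halfLine_decaysFaster hs hv (t := 1) (d := R) (c := c) ?_).add hs
      (gaussianReal_halfLine_decaysFaster hs hv (t := -1) (d := R) ?_)).mono le_rfl fun n => ?_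
    · linarith
    · linarith
    · refine (measureReal_mono fun x hx => ?_).trans (measureReal_union_le _ _)
      rw [Set.mem_compl_iff, mem_closedBall_zero_iff, not_le, Real.norm_eq_abs, lt_abs] at hx
      exact hx.imp (fun h => by simpa using h.le) (fun h => by simpa using h.le)

theorem gaussianReal_ball_zero_decaysSlower (hs : Tendsto s atTop atTop)
    (hv : Tendsto (fun n => s n * v n) atTop (𝓝 τ)) {η b : ℝ} (hη : 0 < η) (hb : 0 < b) :
    DecaysSlower s b fun n => (gaussianReal 0 (v n)).real (Metric.ball 0 η) := by
  have hcompl : DecaysFaster s 0 fun n => (gaussianReal 0 (v n)).real (Metric.ball 0 η)ᶜ := by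
    refine (hasLocalUpperBound_gaussianReal hs hv).decaysFaster hs fun x hx => ?_
    rw [Metric.isOpen_ball.isClosed_compl.closure_eq] at hx
    rw [EReal.coe_zero, ← EReal.coe_ennreal_zero, EReal.coe_ennreal_lt_coe_ennreal_iff]
    refine gaussianRate_pos τ fun hx0 => hx ?_
    rw [hx0]
    exact Metric.mem_ball_self hη
  obtain ⟨d, hd, hcompl⟩ := hcompl.exists_gt
  exact (decaysSlower_of_compl hs (lt_min hd hb)
    (hcompl.mono (min_le_left d b) fun n => le_rfl)).mono (min_le_right d b) fun n => le_rfl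

theorem hasLocalLowerBound_gaussianReal (hs : Tendsto s atTop atTop)
    (hv : Tendsto (fun n => s n * v n) atTop (𝓝 τ)) :
    HasLocalLowerBound (fun n => gaussianReal 0 (v n)) s (gaussianRate τ) := by
  intro x c hc U hU
  obtain ⟨ε, hε, hεU⟩ := Metric.mem_nhds_iff.1 hU
  rcases eq_or_ne τ 0 with rfl | hτ
  · obtain rfl : x = 0 := by
      by_contra hx
      simp [gaussianRate_zero_of_ne hx] at hc
    rw [gaussianRate_apply_zero, EReal.coe_ennreal_zero, ← EReal.coe_zero,
      EReal.coe_lt_coe_iff] at hc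
    exact (gaussianReal_ball_zero_decaysSlower hs hv hε hc).mono le_rfl
      fun n => measureReal_mono hεU
  · rw [gaussianRate_eq_ofReal hτ, EReal.coe_ennreal_ofReal, max_eq_left (by positivity),
      EReal.coe_lt_coe_iff] at hc
    obtain ⟨η, ⟨hη, hηε⟩, hηc⟩ : ∃ η ∈ Set.Ioo 0 ε, (x ^ 2 / 2 + |x| * η) / τ < c := by
      have hcont : Continuous fun η : ℝ => (x ^ 2 / 2 + |x| * η) / τ := by fun_prop
      have hlim : ∀ᶠ η in 𝓝[>] 0, (x ^ 2 / 2 + |x| * η) / τ < c := by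
        refine (hcont.tendsto 0).mono_left nhdsWithin_le_nhds |>.eventually_lt_const ?_
        rwa [mul_zero, add_zero, div_div]
      exact ((eventually_mem_set.2 (Ioo_mem_nhdsGT hε)).and hlim).exists
    obtain ⟨d, hηd, hdc⟩ := exists_between hηc
    have hτ' : (0 : ℝ) < τ := by positivity
    have hexp : DecaysSlower s d fun n => exp (-((x ^ 2 / 2 + |x| * η) / v n)) := by
      refine DecaysSlower.of_tendsto (tendsto_const_nhds.div hv hτ'.ne') hηd hs ?_
      filter_upwards [hs.eventually_gt_atTop 0] with n hn
      rw [Pi.div_apply, ← mul_div_assoc, mul_div_mul_left _ _ hn.ne']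
    obtain ⟨b, hb, hlow⟩ := hexp.mul
      (gaussianReal_ball_zero_decaysSlower hs hv hη (sub_pos.2 hdc))
    refine ⟨b, by linarith, ?_⟩
    filter_upwards [hlow, hv.eventually_const_lt hτ'] with n hn hvn
    have hvn' : v n ≠ 0 := fun h0 => by simp [h0] at hvn
    exact (hn.trans (gaussianReal_ball_shift_le hvn' x η)).trans
      (measureReal_mono ((Metric.ball_subset_ball hηε.le).trans hεU))

end Gaussian

/-! ### The smoothed magnetization -/

theorem cosh_sq_mul_exp_le {a b C : ℝ} (hC : cosh a ^ 2 ≤ C) (hb : b ^ 2 ≤ 1) :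
    cosh a ^ 2 * exp (b ^ 2 / (2 * C)) ≤ cosh (a + b) * cosh (a - b) := by
  have hC₁ : 1 ≤ C := (one_le_pow₀ (one_le_cosh a)).trans hC
  have hsinh : b ^ 2 ≤ sinh b ^ 2 := by
    rw [sq_le_sq, abs_sinh]
    exact self_le_sinh_iff.2 (abs_nonneg b)
  have hexp : exp (b ^ 2 / (2 * C)) ≤ 1 + 2 * (b ^ 2 / (2 * C)) := by
    have hle : b ^ 2 / (2 * C) ≤ 1 := (div_le_one (by positivity)).2 (by linarith)
    have hnonneg : 0 ≤ b ^ 2 / (2 * C) := by positivity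
    have := abs_exp_sub_one_le (abs_le.2 ⟨by linarith, hle⟩)
    rw [abs_of_nonneg hnonneg] at this
    linarith [le_abs_self (exp (b ^ 2 / (2 * C)) - 1)]
  calc cosh a ^ 2 * exp (b ^ 2 / (2 * C)) ≤ cosh a ^ 2 * (1 + 2 * (b ^ 2 / (2 * C))) := by gcongr
    _ = cosh a ^ 2 + cosh a ^ 2 / C * b ^ 2 := by field_simp
    _ ≤ cosh a ^ 2 + 1 * sinh b ^ 2 := by
        gcongr
        exact div_le_one_of_le₀ hC (zero_le_one.trans hC₁)
    _ = cosh (a + b) * cosh (a - b) := by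
        rw [cosh_add, cosh_sub]
        linear_combination (-cosh a ^ 2) * cosh_sq b - sinh b ^ 2 * cosh_sq a

theorem prod_cosh_sq_mul_exp_card_le {ι : Type*} [Fintype ι] {a : ι → ℝ} {b C : ℝ} {S : Finset ι}
    (hS : ∀ i ∈ S, cosh (a i) ^ 2 ≤ C) (hb : b ^ 2 ≤ 1) :
    (∏ i, cosh (a i)) ^ 2 * exp (b ^ 2 / (2 * C) * S.card) ≤
      (∏ i, cosh (a i + b)) * ∏ i, cosh (a i - b) := by
  classical
  have hexp : exp (b ^ 2 / (2 * C) * S.card) =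
      ∏ i, if i ∈ S then exp (b ^ 2 / (2 * C)) else 1 := by
    rw [Finset.prod_ite_mem, Finset.univ_inter, Finset.prod_const, ← exp_nat_mul, mul_comm]
  rw [hexp, ← Finset.prod_pow, ← Finset.prod_mul_distrib, ← Finset.prod_mul_distrib]
  refine Finset.prod_le_prod (fun i _ => by positivity) fun i _ => ?_
  split_ifs with hi
  · exact cosh_sq_mul_exp_le (hS i hi) hb
  · refine le_trans ?_ (cosh_sq_mul_exp_le le_rfl hb)
    gcongr
    exact one_le_exp (by positivity)

/-- Up to a factor independent of `x`, the density at `x` of the law of `S_n / n + W / √n` under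
the Gibbs measure (the Hubbard–Stratonovich transform). -/
def hsDensity (β : ℝ) (h : ℕ → ℝ) (n : ℕ) (x : ℝ) : ℝ :=
  exp (-(β * n * x ^ 2 / 2)) * ∏ i : Fin n, cosh (β * (x + h i))

theorem hsDensity_nonneg (β : ℝ) (h : ℕ → ℝ) (n : ℕ) (x : ℝ) : 0 ≤ hsDensity β h n x := by
  unfold hsDensity
  positivity

theorem hsDensity_sq_le {β : ℝ} (h : ℕ → ℝ) (n : ℕ) {x e C : ℝ} {S : Finset (Fin n)}
    (hS : ∀ i ∈ S, cosh (β * (x + h i)) ^ 2 ≤ C) (he : (β * e) ^ 2 ≤ 1) :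
    hsDensity β h n x ^ 2 ≤ exp (β * n * e ^ 2 - (β * e) ^ 2 / (2 * C) * S.card) *
      (hsDensity β h n (x + e) * hsDensity β h n (x - e)) := by
  have hprod := prod_cosh_sq_mul_exp_card_le hS he
  set c := (β * e) ^ 2 / (2 * C) * S.card
  calc hsDensity β h n x ^ 2
      = exp (-(β * n * x ^ 2)) * exp (-c) * ((∏ i : Fin n, cosh (β * (x + h i))) ^ 2 * exp c) := by
        rw [hsDensity, mul_pow, ← exp_nat_mul, mul_assoc _ (exp (-c)), mul_left_comm (exp (-c)),
          ← exp_add (-c), neg_add_cancel, exp_zero, mul_one]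
        ring_nf
    _ ≤ exp (-(β * n * x ^ 2)) * exp (-c) * ((∏ i : Fin n, cosh (β * (x + h i) + β * e)) *
          ∏ i : Fin n, cosh (β * (x + h i) - β * e)) := by gcongr
    _ = exp (β * n * e ^ 2 - c) * (hsDensity β h n (x + e) * hsDensity β h n (x - e)) := by
        have hexp : exp (-(β * n * x ^ 2)) * exp (-c) = exp (β * n * e ^ 2 - c) *
            (exp (-(β * n * (x + e) ^ 2 / 2)) * exp (-(β * n * (x - e) ^ 2 / 2))) := by
          simp only [← exp_add]
          ring_nf
        rw [hexp, hsDensity, hsDensity]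
        have hadd : ∀ i : Fin n, β * (x + h i) + β * e = β * (x + e + h i) := fun i => by ring
        have hsub : ∀ i : Fin n, β * (x + h i) - β * e = β * (x - e + h i) := fun i => by ring
        simp only [hadd, hsub]
        ring

theorem hsDensity_le {β : ℝ} (h : ℕ → ℝ) (n : ℕ) {x e C : ℝ} {S : Finset (Fin n)}
    (hS : ∀ i ∈ S, cosh (β * (x + h i)) ^ 2 ≤ C) (he : (β * e) ^ 2 ≤ 1) :
    hsDensity β h n x ≤ exp ((β * n * e ^ 2 - (β * e) ^ 2 / (2 * C) * S.card) / 2) *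
      (hsDensity β h n (x + e) + hsDensity β h n (x - e)) := by
  have hsq := hsDensity_sq_le h n hS he
  set t := β * n * e ^ 2 - (β * e) ^ 2 / (2 * C) * S.card
  have hp := hsDensity_nonneg β h n (x + e)
  have hq := hsDensity_nonneg β h n (x - e)
  refine le_of_sq_le_sq ?_ (by positivity)
  calc hsDensity β h n x ^ 2
      ≤ exp t * (hsDensity β h n (x + e) * hsDensity β h n (x - e)) := hsq
    _ ≤ exp t * (hsDensity β h n (x + e) + hsDensity β h n (x - e)) ^ 2 := by
        gcongr
        nlinarith
    _ = (exp (t / 2) * (hsDensity β h n (x + e) + hsDensity β h n (x - e))) ^ 2 := by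
        rw [mul_pow, ← exp_nat_mul]
        push_cast
        rw [mul_div_cancel₀ _ two_ne_zero]

section GibbsMeasure

variable (β : ℝ) (h : ℕ → ℝ) (n : ℕ)

theorem sum_gibbsWeight_pos : 0 < ∑ σ : Fin n → Bool, gibbsWeight β h n σ :=
  Finset.sum_pos (fun _ _ => exp_pos _) Finset.univ_nonempty

theorem lintegral_gibbsMeasure (f : (Fin n → Bool) → ℝ≥0∞) :
    ∫⁻ σ, f σ ∂gibbsMeasure β h n = (ENNReal.ofReal (∑ σ : Fin n → Bool, gibbsWeight β h n σ))⁻¹ *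
      ∑ σ : Fin n → Bool, ENNReal.ofReal (gibbsWeight β h n σ) * f σ := by
  simp only [gibbsMeasure, lintegral_smul_measure, lintegral_finsetSum_measure, lintegral_dirac,
    smul_eq_mul]

instance isProbabilityMeasure_gibbsMeasure : IsProbabilityMeasure (gibbsMeasure β h n) := by
  refine ⟨?_⟩
  have hweight : ∀ σ : Fin n → Bool, 0 ≤ gibbsWeight β h n σ := fun σ => (exp_pos _).le
  rw [← lintegral_one, lintegral_gibbsMeasure]
  simp only [mul_one]
  rw [← ENNReal.ofReal_sum_of_nonneg fun σ _ => hweight σ]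
  exact ENNReal.inv_mul_cancel (ENNReal.ofReal_pos.2 (sum_gibbsWeight_pos β h n)).ne'
    ENNReal.ofReal_ne_top

theorem sum_exp_sum_mul_spin {n : ℕ} (a : Fin n → ℝ) :
    ∑ σ : Fin n → Bool, exp (∑ i, a i * spin (σ i)) = 2 ^ n * ∏ i, cosh (a i) := by
  simp only [exp_sum]
  rw [← Fintype.prod_sum fun i b => exp (a i * spin b)]
  have hcosh : ∀ i, ∑ b, exp (a i * spin b) = 2 * cosh (a i) := fun i => by
    simp only [Fintype.sum_bool, spin, if_true, Bool.false_eq_true, if_false, mul_one, mul_neg,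
      cosh_eq]
    ring
  simp only [hcosh, Finset.prod_mul_distrib, Finset.prod_const, Finset.card_univ, Fintype.card_fin]

end GibbsMeasure

theorem conv_gaussianReal_eq_withDensity (P : Measure ℝ) [SFinite P] {v : ℝ≥0} (hv : v ≠ 0) :
    P ∗ gaussianReal 0 v = volume.withDensity fun y => ∫⁻ x, gaussianPDF x v y ∂P := by
  have : Measurable fun p : ℝ × ℝ => gaussianPDF p.1 v p.2 := by
    simp only [gaussianPDF, gaussianPDFReal]
    fun_prop
  ext C hC
  rw [withDensity_apply _ hC, lintegral_lintegral_swap (by fun_prop), ← lintegral_indicator_one hC,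
    Measure.lintegral_conv (measurable_one.indicator hC)]
  refine lintegral_congr fun x => ?_
  have hmap : gaussianReal x v = (gaussianReal 0 v).map (x + ·) := by
    rw [gaussianReal_map_const_add, zero_add]
  rw [← lintegral_map (measurable_one.indicator hC) (measurable_const_add x), ← hmap,
    lintegral_indicator_one hC, gaussianReal_apply x hv]

/-- The variance of `W / n ^ (α - 1/2)`. -/
def noiseVariance (β α : ℝ) (n : ℕ) : ℝ≥0 := (β * (n : ℝ) ^ (2 * α - 1))⁻¹.toNNReal

theorem coe_noiseVariance {β : ℝ} (hβ : 0 ≤ β) (α : ℝ) (n : ℕ) :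
    (noiseVariance β α n : ℝ) = (β * (n : ℝ) ^ (2 * α - 1))⁻¹ :=
  Real.coe_toNNReal _ (by positivity)

theorem gaussianReal_map_div_rpow {β : ℝ} (hβ : 0 ≤ β) (α : ℝ) (n : ℕ) :
    (gaussianReal 0 β⁻¹.toNNReal).map (fun w => w / (n : ℝ) ^ (α - 1 / 2)) =
      gaussianReal 0 (noiseVariance β α n) := by
  rw [gaussianReal_map_div_const, zero_div]
  congr 1
  apply NNReal.coe_injective
  have hpow : ((n : ℝ) ^ (α - 1 / 2)) ^ 2 = (n : ℝ) ^ (2 * α - 1) := by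
    rw [← rpow_mul_natCast n.cast_nonneg]
    push_cast
    ring_nf
  rw [NNReal.coe_div, Real.coe_toNNReal _ (by positivity), coe_noiseVariance hβ, mul_inv, ← hpow,
    NNReal.coe_mk, div_eq_mul_inv]

theorem map_prod_add_eq_conv {Ω₁ Ω₂ E : Type*} [MeasurableSpace Ω₁] [MeasurableSpace Ω₂]
    [AddMonoid E] [MeasurableSpace E] [MeasurableAdd₂ E] (P : Measure Ω₁) (Q : Measure Ω₂)
    [SFinite P] [SFinite Q] {X : Ω₁ → E} {Y : Ω₂ → E} (hX : Measurable X) (hY : Measurable Y) :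
    (P.prod Q).map (fun p => X p.1 + Y p.2) = P.map X ∗ Q.map Y := by
  rw [Measure.conv, Measure.map_prod_map P Q hX hY,
    Measure.map_map measurable_add (hX.prodMap hY)]
  rfl

/-- The law of `(S_n - n m) / n ^ α` under the Gibbs measure. -/
def magnetizationLaw (β m α : ℝ) (h : ℕ → ℝ) (n : ℕ) : Measure ℝ :=
  (gibbsMeasure β h n).map fun σ => (mag σ - n * m) / (n : ℝ) ^ α

instance isProbabilityMeasure_magnetizationLaw (β m α : ℝ) (h : ℕ → ℝ) (n : ℕ) :
    IsProbabilityMeasure (magnetizationLaw β m α h n) :=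
  Measure.isProbabilityMeasure_map (measurable_of_finite _).aemeasurable

/-- The law of `(S_n - n m) / n ^ α + W / n ^ (α - 1/2)`. -/
def smoothedLaw (β m α : ℝ) (h : ℕ → ℝ) (n : ℕ) : Measure ℝ :=
  magnetizationLaw β m α h n ∗ gaussianReal 0 (noiseVariance β α n)

instance isProbabilityMeasure_smoothedLaw (β m α : ℝ) (h : ℕ → ℝ) (n : ℕ) :
    IsProbabilityMeasure (smoothedLaw β m α h n) := by
  unfold smoothedLaw
  infer_instance

theorem map_prod_gaussianReal_eq_smoothedLaw {β : ℝ} (hβ : 0 ≤ β) (m α : ℝ) (h : ℕ → ℝ) (n : ℕ) :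
    ((gibbsMeasure β h n).prod (gaussianReal 0 β⁻¹.toNNReal)).map (fun p =>
      (mag p.1 - n * m) / (n : ℝ) ^ α + p.2 / (n : ℝ) ^ (α - 1 / 2)) = smoothedLaw β m α h n := by
  rw [smoothedLaw, ← gaussianReal_map_div_rpow hβ, magnetizationLaw]
  exact map_prod_add_eq_conv (X := fun σ => (mag σ - n * m) / (n : ℝ) ^ α)
    (Y := fun w => w / (n : ℝ) ^ (α - 1 / 2)) _ _ (measurable_of_finite _) (by fun_prop)

section SmoothedLaw

variable {β m α : ℝ} {h : ℕ → ℝ} {n : ℕ}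

theorem gibbsWeight_mul_gaussianPDFReal (hβ : 0 < β) (hn : n ≠ 0) (σ : Fin n → Bool) (y : ℝ) :
    gibbsWeight β h n σ *
        gaussianPDFReal ((mag σ - n * m) / (n : ℝ) ^ α) (noiseVariance β α n) y =
      (√(2 * π * noiseVariance β α n))⁻¹ * exp (-(β * n * (m + y * (n : ℝ) ^ (α - 1)) ^ 2 / 2)) *
        exp (∑ i : Fin n, β * (m + y * (n : ℝ) ^ (α - 1) + h i) * spin (σ i)) := by
  have hn₀ : (0 : ℝ) < n := by positivity
  have hlin : ∀ x, ∑ i : Fin n, β * (x + h i) * spin (σ i) =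
      β * x * mag σ + β * ∑ i : Fin n, h i * spin (σ i) := fun x => by
    rw [mag, Finset.mul_sum, Finset.mul_sum, ← Finset.sum_add_distrib]
    exact Finset.sum_congr rfl fun i _ => by ring
  have hvar : (n : ℝ) ^ (2 * α - 1) = ((n : ℝ) ^ α) ^ 2 / n := by
    rw [rpow_sub_one hn₀.ne', mul_comm, rpow_mul hn₀.le, rpow_two]
  rw [gibbsWeight, gaussianPDFReal, mul_left_comm, mul_assoc _ (exp _), ← exp_add, ← exp_add, hlin,
    coe_noiseVariance hβ.le, hvar, rpow_sub_one hn₀.ne']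
  congr 2
  have : 0 < (n : ℝ) ^ α := by positivity
  field_simp
  ring

theorem smoothedLaw_eq_withDensity (hβ : 0 < β) (m α : ℝ) (h : ℕ → ℝ) (hn : n ≠ 0) :
    ∃ A : ℝ, 0 ≤ A ∧ smoothedLaw β m α h n =
      volume.withDensity
        fun y => ENNReal.ofReal (A * hsDensity β h n (m + y * (n : ℝ) ^ (α - 1))) := by
  have hZ := sum_gibbsWeight_pos β h n
  have hv : noiseVariance β α n ≠ 0 := by
    have : 0 < (noiseVariance β α n : ℝ) := by
      rw [coe_noiseVariance hβ.le]
      positivity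
    exact_mod_cast this.ne'
  refine ⟨(∑ σ : Fin n → Bool, gibbsWeight β h n σ)⁻¹ *
    ((√(2 * π * noiseVariance β α n))⁻¹ * 2 ^ n), by positivity, ?_⟩
  rw [smoothedLaw, conv_gaussianReal_eq_withDensity _ hv]
  congr 1
  funext y
  have hpdf : Measurable fun x => gaussianPDF x (noiseVariance β α n) y := by
    simp only [gaussianPDF, gaussianPDFReal]
    fun_prop
  rw [magnetizationLaw, lintegral_map hpdf (measurable_of_finite _), lintegral_gibbsMeasure,
    ← ENNReal.ofReal_inv_of_pos hZ]
  have hweight : ∀ σ : Fin n → Bool, 0 ≤ gibbsWeight β h n σ := fun σ => (exp_pos _).le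
  simp only [gaussianPDF, ← ENNReal.ofReal_mul (hweight _), gibbsWeight_mul_gaussianPDFReal hβ hn]
  rw [← ENNReal.ofReal_sum_of_nonneg fun σ _ => by positivity, ← ENNReal.ofReal_mul (by positivity),
    ← Finset.mul_sum, sum_exp_sum_mul_spin, hsDensity]
  ring_nf

end SmoothedLaw

theorem withDensity_ball_le {g : ℝ → ℝ≥0∞} (hg : Measurable g) {K : ℝ≥0∞} {d δ : ℝ}
    (h : ∀ y ∈ Metric.ball 0 δ, g y ≤ K * (g (y + d) + g (y - d))) :
    volume.withDensity g (Metric.ball 0 δ) ≤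
      K * (volume.withDensity g (Metric.ball d δ) + volume.withDensity g (Metric.ball (-d) δ)) := by
  have hshift : ∀ z : ℝ, volume.withDensity g (Metric.ball z δ) =
      ∫⁻ y in Metric.ball 0 δ, g (y + z) := fun z => by
    have hball : (· + z) ⁻¹' Metric.ball z δ = Metric.ball 0 δ := by
      ext y
      simp
    rw [withDensity_apply _ measurableSet_ball, ← hball]
    exact ((measurePreserving_add_right volume z).setLIntegral_comp_preimage
      measurableSet_ball hg).symm
  rw [withDensity_apply _ measurableSet_ball, hshift, hshift,
    ← lintegral_add_left (by fun_prop), ← lintegral_const_mul _ (by fun_prop)]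
  exact setLIntegral_mono' measurableSet_ball h

theorem hsDensity_add_mul_rpow_le {β m α M p y : ℝ} (hα : α ≤ 1) {h : ℕ → ℝ} {n : ℕ}
    (hn : n ≠ 0) (hsmall : (β * (n : ℝ) ^ (α - 1)) ^ 2 ≤ 1)
    (hfields : p * n ≤ Finset.card {i : Fin n | |h i| ≤ M}) (hy : |y| ≤ 1) :
    hsDensity β h n (m + y * (n : ℝ) ^ (α - 1)) ≤
      exp ((n : ℝ) ^ (2 * α - 1) * ((β - p * (β ^ 2 / (2 * cosh (β * (|m| + 1 + M)) ^ 2))) / 2)) *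
        (hsDensity β h n (m + (y + 1) * (n : ℝ) ^ (α - 1)) +
          hsDensity β h n (m + (y - 1) * (n : ℝ) ^ (α - 1))) := by
  have hn₀ : (0 : ℝ) < n := by positivity
  have hscale : (n : ℝ) ^ (2 * α - 1) = n * ((n : ℝ) ^ (α - 1)) ^ 2 := by
    rw [show 2 * α - 1 = 1 + (α - 1) * (2 : ℕ) by push_cast; ring, rpow_add hn₀, rpow_one,
      rpow_mul_natCast hn₀.le]
  rw [hscale]
  set e := (n : ℝ) ^ (α - 1)
  set C := cosh (β * (|m| + 1 + M)) ^ 2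
  have he : e ≤ 1 :=
    rpow_le_one_of_one_le_of_nonpos (Nat.one_le_cast.2 (Nat.one_le_iff_ne_zero.2 hn)) (by linarith)
  have hcosh : ∀ i ∈ ({i : Fin n | |h i| ≤ M} : Finset (Fin n)),
      cosh (β * (m + y * e + h i)) ^ 2 ≤ C := fun i hi => by
    have hye : |y * e| ≤ 1 := by
      rw [abs_mul, abs_of_nonneg (by positivity : 0 ≤ e)]
      exact mul_le_one₀ hy (by positivity) he
    have hsum : |m + y * e + h i| ≤ |m| + 1 + M :=
      (abs_add_three _ _ _).trans (by gcongr; exact (Finset.mem_filter.1 hi).2)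
    refine pow_le_pow_left₀ (cosh_pos _).le (cosh_le_cosh.2 ?_) 2
    rw [abs_mul, abs_mul]
    exact mul_le_mul_of_nonneg_left (hsum.trans (le_abs_self _)) (abs_nonneg β)
  have hexp : (β * n * e ^ 2 - (β * e) ^ 2 / (2 * C) * Finset.card {i : Fin n | |h i| ≤ M}) / 2 ≤
      n * e ^ 2 * ((β - p * (β ^ 2 / (2 * C))) / 2) := by
    have := mul_le_mul_of_nonneg_left hfields (by positivity : 0 ≤ (β * e) ^ 2 / (2 * C))
    linear_combination this / 2
  rw [show m + (y + 1) * e = m + y * e + e by ring, show m + (y - 1) * e = m + y * e - e by ring]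
  exact (hsDensity_le h n hcosh hsmall).trans (mul_le_mul_of_nonneg_right (exp_le_exp.2 hexp)
    (add_nonneg (hsDensity_nonneg _ _ _ _) (hsDensity_nonneg _ _ _ _)))

theorem smoothedLaw_ball_le {β m α M p δ : ℝ} (hβ : 0 < β) (hα : α ≤ 1) {h : ℕ → ℝ} {n : ℕ}
    (hn : n ≠ 0) (hsmall : (β * (n : ℝ) ^ (α - 1)) ^ 2 ≤ 1)
    (hfields : p * n ≤ Finset.card {i : Fin n | |h i| ≤ M}) (hδ : δ ≤ 1) :
    (smoothedLaw β m α h n).real (Metric.ball 0 δ) ≤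
      exp ((n : ℝ) ^ (2 * α - 1) * ((β - p * (β ^ 2 / (2 * cosh (β * (|m| + 1 + M)) ^ 2))) / 2)) *
        ((smoothedLaw β m α h n).real (Metric.ball 1 δ) +
          (smoothedLaw β m α h n).real (Metric.ball (-1) δ)) := by
  obtain ⟨A, hA, hlaw⟩ := smoothedLaw_eq_withDensity hβ m α h hn
  set K := exp ((n : ℝ) ^ (2 * α - 1) *
    ((β - p * (β ^ 2 / (2 * cosh (β * (|m| + 1 + M)) ^ 2))) / 2))
  have hK : 0 ≤ K := (exp_pos _).le
  have hmeas : Measurable (hsDensity β h n) := by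
    unfold hsDensity
    fun_prop
  have hle : smoothedLaw β m α h n (Metric.ball 0 δ) ≤ ENNReal.ofReal K *
      (smoothedLaw β m α h n (Metric.ball 1 δ) + smoothedLaw β m α h n (Metric.ball (-1) δ)) := by
    rw [hlaw]
    refine withDensity_ball_le (by fun_prop) fun y hy => ?_
    have hpoint := hsDensity_add_mul_rpow_le (m := m) hα hn hsmall hfields
      ((mem_ball_zero_iff.1 hy).le.trans hδ)
    rw [← ENNReal.ofReal_add (mul_nonneg hA (hsDensity_nonneg _ _ _ _))
      (mul_nonneg hA (hsDensity_nonneg _ _ _ _)), ← ENNReal.ofReal_mul hK, ← mul_add, mul_left_comm]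
    exact ENNReal.ofReal_le_ofReal (mul_le_mul_of_nonneg_left hpoint hA)
  have hreal := ENNReal.toReal_mono (by finiteness) hle
  rwa [ENNReal.toReal_mul, ENNReal.toReal_ofReal hK,
    ENNReal.toReal_add (measure_ne_top _ _) (measure_ne_top _ _)] at hreal

theorem HasLocalLowerBound.min_le_of_ball_le {R : ℕ → Measure ℝ} {s : ℕ → ℝ} {I : ℝ → ℝ≥0∞}
    [∀ n, IsFiniteMeasure (R n)] (hlow : HasLocalLowerBound R s I) (hup : HasLocalUpperBound R s I)
    (hs : Tendsto s atTop atTop) (h₀ : I 0 = 0) {κ : ℝ}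
    (hball : ∀ᶠ n in atTop, ∀ δ ≤ 1, (R n).real (Metric.ball 0 δ) ≤
      exp (s n * κ) * ((R n).real (Metric.ball 1 δ) + (R n).real (Metric.ball (-1) δ))) :
    (min (I 1) (I (-1)) : EReal) ≤ κ := by
  by_contra! hκ
  obtain ⟨c, hκc, hc⟩ := EReal.lt_iff_exists_real_btwn.1 hκ
  obtain ⟨U, hU, hRU⟩ := hup.exists_nhds 1 c (hc.trans_le (min_le_left _ _))
  obtain ⟨V, hV, hRV⟩ := hup.exists_nhds (-1) c (hc.trans_le (min_le_right _ _))
  have hball_nhds : ∀ᶠ δ in 𝓝[>] (0 : ℝ), Metric.ball 1 δ ⊆ U ∧ Metric.ball (-1) δ ⊆ V := by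
    obtain ⟨ε, hε, hεU⟩ := Metric.mem_nhds_iff.1 hU
    obtain ⟨η, hη, hηV⟩ := Metric.mem_nhds_iff.1 hV
    filter_upwards [Ioo_mem_nhdsGT hε, Ioo_mem_nhdsGT hη] with δ hδε hδη
    exact ⟨(Metric.ball_subset_ball hδε.2.le).trans hεU,
      (Metric.ball_subset_ball hδη.2.le).trans hηV⟩
  obtain ⟨δ, ⟨hδU, hδV⟩, hδ₀, hδ₁⟩ :=
    (hball_nhds.and (eventually_mem_set.2 (Ioo_mem_nhdsGT zero_lt_one))).exists
  obtain ⟨b, hb, hsum⟩ := hRU.add hs hRV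
  have hcκ : 0 < c - κ := sub_pos.2 (EReal.coe_lt_coe_iff.1 hκc)
  refine (hlow 0 (c - κ) ?_ _ (Metric.ball_mem_nhds 0 hδ₀)).not_decaysFaster hs
    ⟨b - κ, by linarith, ?_⟩
  · rw [h₀, EReal.coe_ennreal_zero]
    exact EReal.coe_pos.2 hcκ
  filter_upwards [hball, hsum] with n hn hsn
  calc (R n).real (Metric.ball 0 δ)
      ≤ exp (s n * κ) * ((R n).real (Metric.ball 1 δ) + (R n).real (Metric.ball (-1) δ)) :=
        hn δ hδ₁.le
    _ ≤ exp (s n * κ) * ((R n).real U + (R n).real V) := by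
        gcongr
        · exact measure_ne_top _ _
        · exact measure_ne_top _ _
    _ ≤ exp (s n * κ) * exp (-(s n * b)) := by gcongr
    _ = exp (-(s n * (b - κ))) := by rw [← exp_add]; ring_nf

/-! ### Frequency of bounded fields -/

section ProductMeasure

variable {ν : Measure ℝ} {μ : Measure (ℕ → ℝ)}

theorem IsProductMeasure.map_eval [IsProbabilityMeasure ν] (hμ : IsProductMeasure ν μ) (i : ℕ) :
    μ.map (fun h => h i) = ν := by
  have hcomp : (fun h : ℕ → ℝ => h i) =
      (fun g : Fin (i + 1) → ℝ => g (Fin.last i)) ∘ fun h j => h j := by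
    funext h
    simp only [Function.comp_apply, Fin.val_last]
  rw [hcomp, ← Measure.map_map (by fun_prop) (by fun_prop), hμ]
  exact (measurePreserving_eval (fun _ => ν) (Fin.last i)).map_eq

theorem IsProductMeasure.indepFun_eval [IsProbabilityMeasure ν] [IsProbabilityMeasure μ]
    (hμ : IsProductMeasure ν μ) {i j : ℕ} (hij : i ≠ j) :
    IndepFun (fun h : ℕ → ℝ => h i) (fun h => h j) μ := by
  have hind : iIndepFun (fun (a : Fin (max i j + 1)) (h : ℕ → ℝ) => h a) μ := by
    rw [iIndepFun_iff_map_fun_eq_pi_map fun a => (measurable_pi_apply _).aemeasurable, hμ]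
    congr 1
    funext a
    exact (hμ.map_eval a).symm
  exact hind.indepFun (i := ⟨i, by omega⟩) (j := ⟨j, by omega⟩) (by simpa using hij)

theorem IsProductMeasure.strong_law [IsProbabilityMeasure ν] [IsProbabilityMeasure μ]
    (hμ : IsProductMeasure ν μ) {f : ℝ → ℝ} (hf : Measurable f) (hfν : Integrable f ν) :
    ∀ᵐ h ∂μ, Tendsto (fun n : ℕ => (∑ i ∈ Finset.range n, f (h i)) / n) atTop
      (𝓝 (∫ x, f x ∂ν)) := by
  have hident : ∀ i, IdentDistrib (fun h : ℕ → ℝ => h i) (fun h => h 0) μ μ := fun i =>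
    ⟨(measurable_pi_apply _).aemeasurable, (measurable_pi_apply _).aemeasurable, by
      rw [hμ.map_eval, hμ.map_eval]⟩
  have hmean : ∫ h, f (h 0) ∂μ = ∫ x, f x ∂ν := by
    rw [← integral_map (φ := fun h : ℕ → ℝ => h 0) (measurable_pi_apply 0).aemeasurable
      hf.aestronglyMeasurable, hμ.map_eval 0]
  have hint : Integrable (fun h : ℕ → ℝ => f (h 0)) μ :=
    Integrable.comp_measurable (g := f) (by rwa [hμ.map_eval 0]) (measurable_pi_apply 0)
  rw [← hmean]
  exact strong_law_ae_real (μ := μ) (fun i h => f (h i)) hint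
    (fun i j hij => (hμ.indepFun_eval hij).comp hf hf) fun i => (hident i).comp hf

theorem IsProductMeasure.exists_eventually_mul_le_card [IsProbabilityMeasure ν]
    [IsProbabilityMeasure μ] (hμ : IsProductMeasure ν μ) :
    ∃ M p : ℝ, 0 < p ∧ ∀ᵐ h ∂μ, ∀ᶠ n : ℕ in atTop,
      p * n ≤ Finset.card {i : Fin n | |h i| ≤ M} := by
  obtain ⟨M, hM⟩ : ∃ M : ℕ, 0 < ν {x | |x| ≤ M} := by
    refine exists_measure_pos_of_not_measure_iUnion_null fun hnull => ?_
    have hunion : ⋃ M : ℕ, {x : ℝ | |x| ≤ M} = Set.univ :=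
      Set.iUnion_eq_univ_iff.2 fun x => exists_nat_ge |x|
    simp [hunion] at hnull
  have hmeas : MeasurableSet {x : ℝ | |x| ≤ M} := measurableSet_le (by fun_prop) measurable_const
  have hpos : 0 < ν.real {x | |x| ≤ M} := ENNReal.toReal_pos hM.ne' (measure_ne_top _ _)
  refine ⟨M, ν.real {x | |x| ≤ M} / 2, half_pos hpos, ?_⟩
  filter_upwards [hμ.strong_law (measurable_one.indicator hmeas)
    ((integrable_const 1).indicator hmeas)] with h hh
  rw [integral_indicator_one hmeas] at hh
  filter_upwards [hh.eventually_const_le (half_lt_self hpos), eventually_gt_atTop 0] with n hn hn₀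
  rw [le_div_iff₀ (by exact_mod_cast hn₀)] at hn
  refine hn.trans_eq ?_
  rw [← Fin.sum_univ_eq_sum_range (fun i => Set.indicator {x : ℝ | |x| ≤ M} 1 (h i)),
    Finset.card_filter]
  push_cast
  exact Finset.sum_congr rfl fun i _ => Set.indicator_apply _ _ _

end ProductMeasure

/-! ### Rate functions -/

/-- The rate function `x ↦ l x ^ (2 k) / (2 k)!` of the smoothed magnetization. -/
def smoothedRate (l : ℝ) (k : ℕ) (x : ℝ) : ℝ≥0∞ :=
  ENNReal.ofReal (l * x ^ (2 * k) / Nat.factorial (2 * k))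

/-- The variance of the smoothing on the scale of the speed: the noise contributes to the large
deviations only at minima of type `1`. -/
def limitVariance (β : ℝ) (k : ℕ) : ℝ≥0 := if k = 1 then β⁻¹.toNNReal else 0

theorem tendsto_speed_mul_noiseVariance {β α : ℝ} (hβ : 0 < β) (hα : α < 1) {k : ℕ} (hk : 1 ≤ k) :
    Tendsto (fun n : ℕ => (n : ℝ) ^ (1 - 2 * k * (1 - α)) * noiseVariance β α n) atTop
      (𝓝 (limitVariance β k)) := by
  have hscale : (fun n : ℕ => (n : ℝ) ^ (1 - 2 * k * (1 - α)) * noiseVariance β α n) =ᶠ[atTop]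
      fun n => β⁻¹ * (n : ℝ) ^ (-(2 * (k - 1) * (1 - α))) := by
    filter_upwards [eventually_gt_atTop 0] with n hn
    have hn₀ : (0 : ℝ) < n := Nat.cast_pos.2 hn
    rw [coe_noiseVariance hβ.le, mul_inv, ← rpow_neg hn₀.le, mul_left_comm, ← rpow_add hn₀]
    ring_nf
  refine Tendsto.congr' hscale.symm ?_
  rcases hk.eq_or_lt with rfl | hk
  · simp [limitVariance, hβ.le]
  · have hk₁ : (1 : ℝ) < k := Nat.one_lt_cast.2 hk
    rw [limitVariance, if_neg hk.ne', NNReal.coe_zero, ← mul_zero β⁻¹]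
    have hpos : 0 < 2 * ((k : ℝ) - 1) * (1 - α) := by
      have := sub_pos.2 hk₁
      have := sub_pos.2 hα
      positivity
    exact ((tendsto_rpow_neg_atTop hpos).comp tendsto_natCast_atTop_atTop).const_mul β⁻¹

/-- Completing the square: for `y = (a + b) / a * x` the exponent `u ^ 2 / (2 a) +
(y - u) ^ 2 / (2 b)` exceeds its minimum by `(a + b) / (2 a b) * (u - x) ^ 2`. -/
theorem isExposedBy_quadratic {a b : ℝ} (ha : 0 < a) (hb : 0 < b) (x : ℝ) :
    IsExposedBy (fun u => ENNReal.ofReal (u ^ 2 / (2 * a)))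
      (fun u => ENNReal.ofReal (u ^ 2 / (2 * b)))
      (fun u => ENNReal.ofReal (u ^ 2 / (2 * (a + b)))) x ((a + b) / a * x) := by
  have hsq : ∀ u, u ^ 2 / (2 * a) + ((a + b) / a * x - u) ^ 2 / (2 * b) =
      ((a + b) / a * x) ^ 2 / (2 * (a + b)) + (a + b) / (2 * a * b) * (u - x) ^ 2 := fun u => by
    field_simp
    ring
  refine ⟨ENNReal.ofReal_ne_top, ?_, fun u hu => ?_⟩
  · rw [← ENNReal.ofReal_add (by positivity) (by positivity), hsq, sub_self]
    simp only [ne_eq, OfNat.ofNat_ne_zero, not_false_eq_true, zero_pow, mul_zero, add_zero]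
  · have : 0 < (u - x) ^ 2 := sq_pos_of_ne_zero (sub_ne_zero.2 hu)
    rw [← ENNReal.ofReal_add (by positivity) (by positivity), hsq]
    exact (ENNReal.ofReal_lt_ofReal_iff (by positivity)).2 (lt_add_of_pos_right _ (by positivity))

theorem isExposedBy_self {I : ℝ → ℝ≥0∞} {x : ℝ} (hI : I x ≠ ⊤) :
    IsExposedBy I (gaussianRate 0) I x x := by
  refine ⟨hI, ?_, fun u hu => ?_⟩
  · rw [sub_self, gaussianRate_apply_zero, add_zero]
  · rw [gaussianRate_zero_of_ne (sub_ne_zero.2 hu.symm), add_top]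
    exact hI.lt_top

theorem exists_isExposedBy_mdpRate {β l : ℝ} (hβ : 0 < β) (hl : 0 < l) {k : ℕ}
    (hlβ : k = 1 → l < β) (x : ℝ) :
    ∃ y, IsExposedBy (mdpRate β l k) (gaussianRate (limitVariance β k)) (smoothedRate l k) x y := by
  by_cases hk : k = 1
  · subst hk
    have hσ : 0 < l⁻¹ - β⁻¹ := sub_pos.2 (inv_strictAnti₀ hl (hlβ rfl))
    have hquad := isExposedBy_quadratic hσ (inv_pos.2 hβ) x
    rw [sub_add_cancel] at hquad
    have hnoise : gaussianRate (limitVariance β 1) =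
        fun u => ENNReal.ofReal (u ^ 2 / (2 * β⁻¹)) := by
      funext u
      rw [limitVariance, if_pos rfl, gaussianRate_eq_ofReal (by simpa using hβ),
        coe_toNNReal _ (inv_pos.2 hβ).le]
    have hsmooth : smoothedRate l 1 = fun u => ENNReal.ofReal (u ^ 2 / (2 * l⁻¹)) := by
      funext u
      rw [smoothedRate, mul_one, Nat.factorial_two, Nat.cast_ofNat]
      congr 1
      field_simp
    rw [hnoise, hsmooth]
    exact ⟨_, hquad⟩
  · have hrate : mdpRate β l k = smoothedRate l k := funext fun u => if_neg hk
    rw [hrate, limitVariance, if_neg hk]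
    exact ⟨x, isExposedBy_self ENNReal.ofReal_ne_top⟩

theorem strength_lt_of_hasLDP_smoothedLaw {β m α M p l : ℝ} (hβ : 0 < β) (hα : 1 / 2 < α)
    (hα' : α < 1) (hp : 0 < p) {h : ℕ → ℝ}
    (hfields : ∀ᶠ n : ℕ in atTop, p * n ≤ Finset.card {i : Fin n | |h i| ≤ M})
    (hLDP : HasLDP (smoothedLaw β m α h) (fun n => (n : ℝ) ^ (2 * α - 1))
      (smoothedRate l 1)) : l < β := by
  have hs : Tendsto (fun n : ℕ => (n : ℝ) ^ (2 * α - 1)) atTop atTop :=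
    (tendsto_rpow_atTop (by linarith)).comp tendsto_natCast_atTop_atTop
  have hsmall : ∀ᶠ n : ℕ in atTop, (β * (n : ℝ) ^ (α - 1)) ^ 2 ≤ 1 := by
    have hzero : Tendsto (fun n : ℕ => (n : ℝ) ^ (α - 1)) atTop (𝓝 0) := by
      simpa only [neg_sub, Function.comp_def] using
        (tendsto_rpow_neg_atTop (sub_pos.2 hα')).comp tendsto_natCast_atTop_atTop
    exact ((hzero.const_mul β).pow 2).eventually_le_const (by simp)
  have hmin := (hLDP.hasLocalLowerBound hs).min_le_of_ball_le (hLDP.hasLocalUpperBound hs) hs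
    (by simp [smoothedRate]) (κ := (β - p * (β ^ 2 / (2 * cosh (β * (|m| + 1 + M)) ^ 2))) / 2) (by
      filter_upwards [hfields, hsmall, eventually_ne_atTop 0] with n hfields hsmall hn δ hδ
      exact smoothedLaw_ball_le hβ hα'.le hn hsmall hfields hδ)
  have hloss : 0 < p * (β ^ 2 / (2 * cosh (β * (|m| + 1 + M)) ^ 2)) := by positivity
  have hrate : ∀ x : ℝ, x ^ 2 = 1 → smoothedRate l 1 x = ENNReal.ofReal (l / 2) := fun x hx => by
    rw [smoothedRate, mul_one, hx, mul_one, Nat.factorial_two, Nat.cast_ofNat]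
  rw [hrate 1 (one_pow 2), hrate (-1) neg_one_sq, min_self, EReal.coe_ennreal_ofReal,
    EReal.coe_le_coe_iff] at hmin
  linarith [le_max_left (l / 2) 0]

/-! ### The transfer principle -/

theorem HasLDP.of_conv_gaussianReal {P : ℕ → Measure ℝ} [∀ n, IsProbabilityMeasure (P n)]
    {s : ℕ → ℝ} {v : ℕ → ℝ≥0} {τ : ℝ≥0} {I J : ℝ → ℝ≥0∞}
    (hP : HasLDP (fun n => P n ∗ gaussianReal 0 (v n)) s J) (hs : Tendsto s atTop atTop)
    (hv : Tendsto (fun n => s n * v n) atTop (𝓝 τ))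
    (hJ : ∀ x, ∃ y, IsExposedBy I (gaussianRate τ) J x y) : HasLDP P s I := by
  have hup := hasLocalUpperBound_gaussianReal hs hv
  have hlow := hasLocalLowerBound_gaussianReal hs hv
  have hPup : HasLocalUpperBound P s I := (hP.hasLocalUpperBound hs).of_conv hs hup hlow hJ
  exact hPup.hasLDP ((hP.hasLocalLowerBound hs).of_conv hs hPup hup hJ) hs

theorem transfer_principle_unconditioned_general {β : ℝ} (hβ : 0 < β) {ν : Measure ℝ}
    [IsProbabilityMeasure ν] {μ : Measure (ℕ → ℝ)} [IsProbabilityMeasure μ]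
    (hμ : IsProductMeasure ν μ) (m : ℝ) {k : ℕ} (hk : 1 ≤ k) {l : ℝ} (hl : 0 < l) {α : ℝ}
    (hα : 0 < 1 - 2 * (k : ℝ) * (1 - α)) (hα' : α < 1)
    (H : ∀ᵐ h ∂μ, HasLDP
      (fun n => (((gibbsMeasure β h n).prod (gaussianReal 0 (Real.toNNReal β⁻¹))).map
        (fun p : (Fin n → Bool) × ℝ =>
          (mag p.1 - n * m) / (n : ℝ) ^ α + p.2 / (n : ℝ) ^ (α - 1 / 2))))
      (fun n => (n : ℝ) ^ (1 - 2 * (k : ℝ) * (1 - α)))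
      (fun x => ENNReal.ofReal (l * x ^ (2 * k) / Nat.factorial (2 * k)))) :
    ∀ᵐ h ∂μ, HasLDP
      (fun n => (gibbsMeasure β h n).map (fun σ => (mag σ - n * m) / (n : ℝ) ^ α))
      (fun n => (n : ℝ) ^ (1 - 2 * (k : ℝ) * (1 - α)))
      (mdpRate β l k) := by
  have hs : Tendsto (fun n : ℕ => (n : ℝ) ^ (1 - 2 * k * (1 - α))) atTop atTop :=
    (tendsto_rpow_atTop hα).comp tendsto_natCast_atTop_atTop
  obtain ⟨M, p, hp, hfields⟩ := hμ.exists_eventually_mul_le_card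
  filter_upwards [H, hfields] with h hLDP hfields
  simp only [map_prod_gaussianReal_eq_smoothedLaw hβ.le] at hLDP
  have hlβ : k = 1 → l < β := by
    rintro rfl
    have hspeed : 1 - 2 * ((1 : ℕ) : ℝ) * (1 - α) = 2 * α - 1 := by push_cast; ring
    rw [hspeed] at hα hLDP
    exact strength_lt_of_hasLDP_smoothedLaw hβ (by linarith) hα' hp hfields hLDP
  exact HasLDP.of_conv_gaussianReal (P := magnetizationLaw β m α h) hLDP hs
    (tendsto_speed_mul_noiseVariance hβ hα' hk) (exists_isExposedBy_mdpRate hβ hl hlβ)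

theorem speed_exponent_pos {k : ℕ} (hk : 1 ≤ k) {α : ℝ}
    (hα : 1 - 1 / (2 * (2 * (k : ℝ) - 1)) < α) : 0 < 1 - 2 * (k : ℝ) * (1 - α) := by
  have hk₁ : (1 : ℝ) ≤ k := Nat.one_le_cast.2 hk
  have hle : 1 / (2 * (2 * (k : ℝ) - 1)) ≤ 1 / (2 * k) :=
    one_div_le_one_div_of_le (by linarith) (by linarith)
  have hlt : 1 - α < 1 / (2 * k) := by linarith
  rw [lt_div_iff₀ (by linarith)] at hlt
  linarith

/-- The transfer principle, unconditioned version (Lemma 5.2 (i) of the paper). -/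
theorem transfer_principle_unconditioned
    (β : ℝ) (hβ : 0 < β) (ν : Measure ℝ) [IsProbabilityMeasure ν]
    (μ : Measure (ℕ → ℝ)) [IsProbabilityMeasure μ] (hμ : IsProductMeasure ν μ)
    (m : ℝ) (k : ℕ) (l : ℝ) (hmin : IsMinOfType β ν m k l)
    (α : ℝ) (hα1 : 1 - 1 / (2 * (2 * (k : ℝ) - 1)) < α) (hα2 : α < 1)
    (H : ∀ᵐ h ∂μ, HasLDP
      (fun n => (((gibbsMeasure β h n).prod (gaussianReal 0 (Real.toNNReal β⁻¹))).map
        (fun p : (Fin n → Bool) × ℝ =>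
          (mag p.1 - n * m) / (n : ℝ) ^ α + p.2 / (n : ℝ) ^ (α - 1 / 2))))
      (fun n => (n : ℝ) ^ (1 - 2 * (k : ℝ) * (1 - α)))
      (fun x => ENNReal.ofReal (l * x ^ (2 * k) / Nat.factorial (2 * k)))) :
    ∀ᵐ h ∂μ, HasLDP
      (fun n => (gibbsMeasure β h n).map (fun σ => (mag σ - n * m) / (n : ℝ) ^ α))
      (fun n => (n : ℝ) ^ (1 - 2 * (k : ℝ) * (1 - α)))
      (mdpRate β l k) := by
  obtain ⟨hk, hl, -, -⟩ := hmin
  exact transfer_principle_unconditioned_general hβ hμ m hk hl (speed_exponent_pos hk hα1) hα2 H
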